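/- Let θ ∈ (0, 1/2] be such that θ⁻¹ ≥ 2 is an integer, let n ≥ 2 be an integer, and let U : S_{T[θ,S_n]} → S_{T[θ,S_n]} be a surjective isometry of the unit sphere of T[θ, S_n]. Then there exists a sequence (ε_i)_{i=1}^∞ with values in {−1, 1} such that for every x ∈ S_{T[θ,S_n]} with basis expansion x = Σ_{i=1}^∞ a_i e_i one has U(x) = Σ_{i=1}^∞ ε_i a_i e_i. -/

import Mathlib

open scoped BigOperators

noncomputable section

/-- Projection of a finitely supported vector onto the coordinates in `E`. -/
def tsProj (E : Finset ℕ+) (x : ℕ+ →₀ ℝ) : ℕ+ →₀ ℝ :=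
  x.filter fun i => i ∈ E

/-- The Schreier families `S_n` on the positive integers:
`S₁` consists of the sets `F` with `|F| ≤ min F` (together with `∅`), and `S_{n+1}`
consists of unions `F₁ ∪ ⋯ ∪ F_d` of nonempty members `F₁ < ⋯ < F_d` of `S_n`
with `d ≤ min F₁` (together with `∅`). -/
def Schreier : ℕ → Set (Finset ℕ+)
  | 0 => {F | F.card ≤ 1}
  | 1 => {F | ∀ a ∈ F, F.card ≤ (a : ℕ)}
  | n + 2 =>
      {F | F = ∅ ∨
        ∃ (d : ℕ) (G : Fin d → Finset ℕ+),
          0 < d ∧ (∀ i, G i ∈ Schreier (n + 1)) ∧ (∀ i, (G i).Nonempty) ∧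
          (∀ i j : Fin d, i < j → ∀ a ∈ G i, ∀ b ∈ G j, a < b) ∧
          (∀ i, ∀ a ∈ G i, d ≤ (a : ℕ)) ∧ F = Finset.univ.biUnion G}

/-- A tuple of nonempty finite sets `E 0 < E 1 < ⋯` whose set of minima belongs to `S`. -/
def TsAdmissible (S : Set (Finset ℕ+)) {d : ℕ} (E : Fin d → Finset ℕ+) : Prop :=
  (∀ i, (E i).Nonempty) ∧
  (∀ i j : Fin d, i < j → ∀ a ∈ E i, ∀ b ∈ E j, a < b) ∧
  ∃ μ : Fin d → ℕ+, (∀ i, IsLeast (↑(E i) : Set ℕ+) (μ i)) ∧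
    Finset.univ.image μ ∈ S

/-- The iterated norms `‖·‖_m` in the construction of the Tsirelson norm:
`‖x‖₀` is the supremum norm and
`‖x‖_{m+1} = max(‖x‖_m, sup{θ ∑ᵢ ‖Eᵢ x‖_m : E₁ < ⋯ < E_d, {min Eᵢ} ∈ S})`. -/
def tnormAux (θ : ℝ) (S : Set (Finset ℕ+)) : ℕ → (ℕ+ →₀ ℝ) → ℝ
  | 0, x => ⨆ i, |x i|
  | m + 1, x =>
      max (tnormAux θ S m x)
        (sSup {r : ℝ | ∃ (d : ℕ) (E : Fin d → Finset ℕ+), TsAdmissible S E ∧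
          r = θ * ∑ i, tnormAux θ S m (tsProj (E i) x)})

/-- The Tsirelson norm `‖x‖_{θ,S} = sup_m ‖x‖_m` on `c₀₀`. -/
def tnorm (θ : ℝ) (S : Set (Finset ℕ+)) (x : ℕ+ →₀ ℝ) : ℝ :=
  ⨆ m : ℕ, tnormAux θ S m x

/-- `X`, together with the sequence `e` of unit vectors, is (a realization of) the
Tsirelson space `T[θ, S_n]`: a Banach space containing `c₀₀` isometrically
(w.r.t. the Tsirelson norm) as a dense subspace, in which `(e i)` is a
(1-unconditional) basis, i.e. every `x` has a unique expansion `x = ∑ᵢ aᵢ eᵢ`. -/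
structure IsTsirelsonSpace (θ : ℝ) (n : ℕ) (X : Type*) [NormedAddCommGroup X]
    [NormedSpace ℝ X] (e : ℕ+ → X) : Prop where
  complete : CompleteSpace X
  norm_embed : ∀ a : ℕ+ →₀ ℝ, ‖a.sum fun i c => c • e i‖ = tnorm θ (Schreier n) a
  dense_embed : DenseRange fun a : ℕ+ →₀ ℝ => a.sum fun i c => c • e i
  expansion : ∀ x : X, ∃! a : ℕ+ → ℝ, HasSum (fun i => a i • e i) x

/-!
The pole `e 1` splits off as in `c₀`: if `y` vanishes at `1`, then `‖s • e 1 + y‖ = max |s| ‖y‖`,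
because a member of `S_n` that contains `1` is a singleton. Hence the unit balls around `e 1` and
`-e 1` cover the unit sphere. For `n ≥ 2` only multiples of `e 1` have this property, so a
surjective isometry `U` of the sphere permutes the poles `± e 1`.

Consequently `U` also permutes the two faces of the sphere on which the first coordinate is `± 1`.
Each face is a copy of the unit ball of the vectors vanishing at `1`; combining the action of `U` on
it with the first coordinate gives an isometry of the whole unit ball, which extends to a linear
isometry `T` by Väisälä's proof of the Mazur–Ulam theorem. Near `e i` the norm is a coordinate
functional, and near `T (e i)` no sum `θ * ∑ a, ‖E a x‖` over an admissible family can take this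
role; so `T` permutes the coordinates up to signs. The permutation preserves the large members of
`S_n`, which for `n ≥ 2` forces it to be the identity. Therefore `U` acts by signs on each face.

Finally, the `i`-th coordinate of the image of an arbitrary point of the sphere is read off from the
distances, preserved by `U`, to points of a face whose `i`-th coordinate is `± 1`.
-/

open scoped Finset

/-! ### Schreier families -/

namespace Schreier

/-- `t` cuts `F` into consecutive blocks `{a ∈ F | t a = i}` (`i < d`, possibly empty) that belong
to `S_n`, where `d ≤ min F`: such a labelling witnesses `F ∈ S_{n+1}`. -/
structure IsBlockLabelling (n : ℕ) (F : Finset ℕ+) (d : ℕ) (t : ℕ+ → ℕ) : Prop where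
  monotoneOn : MonotoneOn t F
  lt : ∀ a ∈ F, t a < d
  le : ∀ a ∈ F, d ≤ a
  fiber_mem : ∀ i, {a ∈ F | t a = i} ∈ Schreier n

theorem empty_mem (n : ℕ) : (∅ : Finset ℕ+) ∈ Schreier n := by
  match n with
  | 0 | 1 | n + 2 => simp [Schreier]

theorem exists_isBlockLabelling_one {F : Finset ℕ+} (hF : F ∈ Schreier 1) :
    ∃ d t, IsBlockLabelling 0 F d t := by
  have hlt : ∀ a ∈ F, ∀ b, a < b → #{c ∈ F | c < a} < #{c ∈ F | c < b} := fun a ha b hab =>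
    Finset.card_lt_card <| (Finset.ssubset_iff_of_subset fun c hc => by
      simp only [Finset.mem_filter] at hc ⊢; exact ⟨hc.1, hc.2.trans hab⟩).mpr
        ⟨a, by simp [ha, hab], by simp⟩
  refine ⟨#F, fun a => #{c ∈ F | c < a}, fun a ha b _ hab => ?_, fun a ha => ?_, hF,
    fun i => Finset.card_le_one.mpr fun a ha b hb => ?_⟩
  · rcases hab.eq_or_lt with rfl | hab
    exacts [le_rfl, (hlt a ha b hab).le]
  · exact Finset.card_lt_card <| Finset.filter_ssubset.mpr ⟨a, ha, lt_irrefl a⟩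
  · simp only [Finset.mem_filter] at ha hb
    rcases lt_trichotomy a b with h | h | h
    exacts [absurd (hlt a ha.1 b h) (by lia), h, absurd (hlt b hb.1 a h) (by lia)]

theorem exists_isBlockLabelling_add_two {n : ℕ} {F : Finset ℕ+} (hF : F ∈ Schreier (n + 2)) :
    ∃ d t, IsBlockLabelling (n + 1) F d t := by
  rcases hF with rfl | ⟨d, G, -, hG, hne, hlt, hmin, rfl⟩
  · exact ⟨0, 0, monotoneOn_const, by simp, by simp, by simp [empty_mem]⟩
  classical
  let t : ℕ+ → ℕ := fun a => #{j : Fin d | ∀ b ∈ G j, b < a}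
  have ht : ∀ i, ∀ a ∈ G i, t a = i := by
    intro i a ha
    rw [← Fin.card_Iio i]
    refine congrArg Finset.card (Finset.ext fun j => ?_)
    simp only [Finset.mem_filter, Finset.mem_univ, true_and, Finset.mem_Iio]
    refine ⟨fun h => lt_of_not_ge fun hij => ?_, fun hji b hb => hlt j i hji b hb a ha⟩
    rcases hij.eq_or_lt with rfl | hij
    · exact lt_irrefl a (h a ha)
    · obtain ⟨b, hb⟩ := hne j
      exact lt_asymm (h b hb) (hlt i j hij a ha b hb)
  refine ⟨d, t, fun a _ b _ hab => Finset.card_le_card fun j => ?_, fun a ha => ?_,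
    fun a ha => ?_, fun i => ?_⟩
  · simp only [Finset.mem_filter, Finset.mem_univ, true_and]
    exact fun h b hb => (h b hb).trans_le hab
  · obtain ⟨i, -, hi⟩ := Finset.mem_biUnion.mp ha
    exact ht i a hi ▸ i.isLt
  · obtain ⟨i, -, hi⟩ := Finset.mem_biUnion.mp ha
    exact hmin i a hi
  · by_cases hi : i < d
    · convert hG ⟨i, hi⟩ using 1
      ext a
      simp only [Finset.mem_filter, Finset.mem_biUnion, Finset.mem_univ, true_and]
      refine ⟨fun ⟨⟨j, hj⟩, h⟩ => ?_, fun h => ⟨⟨_, h⟩, ht _ a h⟩⟩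
      rwa [show (⟨i, hi⟩ : Fin d) = j from Fin.ext (h.symm.trans (ht j a hj))]
    · convert empty_mem (n + 1)
      refine Finset.filter_eq_empty_iff.mpr fun a ha h => hi ?_
      obtain ⟨j, -, hj⟩ := Finset.mem_biUnion.mp ha
      exact h ▸ ht j a hj ▸ j.isLt

theorem IsBlockLabelling.mem_one {F : Finset ℕ+} {d : ℕ} {t : ℕ+ → ℕ}
    (h : IsBlockLabelling 0 F d t) : F ∈ Schreier 1 := by
  intro a ha
  refine le_trans ?_ (h.le a ha)
  rw [← Finset.card_range d]
  refine Finset.card_le_card_of_injOn t (fun b hb => by simpa using h.lt b hb)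
    fun b hb c hc hbc => ?_
  exact Finset.card_le_one.mp (h.fiber_mem (t b)) b (by simpa using hb) c (by simpa [hbc] using hc)

theorem IsBlockLabelling.mem_add_two {n : ℕ} {F : Finset ℕ+} {d : ℕ} {t : ℕ+ → ℕ}
    (h : IsBlockLabelling (n + 1) F d t) : F ∈ Schreier (n + 2) := by
  rcases F.eq_empty_or_nonempty with rfl | hne
  · exact empty_mem _
  let I := F.image t
  let r := I.orderEmbOfFin rfl
  have hI : #I ≤ d := by
    rw [← Finset.card_range d]
    exact Finset.card_le_card fun i hi => by
      obtain ⟨a, ha, rfl⟩ := Finset.mem_image.mp hi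
      simpa using h.lt a ha
  refine Or.inr ⟨#I, fun i => {a ∈ F | t a = r i}, Finset.card_pos.mpr (hne.image t),
    fun i => h.fiber_mem _, fun i => ?_, fun i j hij a ha b hb => ?_, fun i a ha => ?_, ?_⟩
  · obtain ⟨a, ha, hai⟩ := Finset.mem_image.mp (I.orderEmbOfFin_mem rfl i)
    exact ⟨a, by simpa [ha] using hai⟩
  · simp only [Finset.mem_filter] at ha hb
    exact h.monotoneOn.reflect_lt ha.1 hb.1 (by rw [ha.2, hb.2]; exact r.lt_iff_lt.mpr hij)
  · exact hI.trans (h.le a (Finset.mem_filter.mp ha).1)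
  · ext a
    simp only [Finset.mem_biUnion, Finset.mem_univ, true_and, Finset.mem_filter,
      exists_and_left, iff_self_and]
    intro ha
    have : t a ∈ Set.range r := by
      rw [Finset.range_orderEmbOfFin]
      exact Finset.mem_image_of_mem t ha
    exact this.imp fun i => Eq.symm

theorem mem_succ_iff {n : ℕ} {F : Finset ℕ+} :
    F ∈ Schreier (n + 1) ↔ ∃ d t, IsBlockLabelling n F d t := by
  cases n with
  | zero => exact ⟨exists_isBlockLabelling_one, fun ⟨_, _, h⟩ => h.mem_one⟩
  | succ n => exact ⟨exists_isBlockLabelling_add_two, fun ⟨_, _, h⟩ => h.mem_add_two⟩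

variable {n : ℕ} {F G : Finset ℕ+}

/-- `G` is obtained from a subset of `F` by moving its elements to the right while keeping their
order. -/
def IsSpread (F G : Finset ℕ+) : Prop :=
  ∃ φ : ℕ+ → ℕ+, Set.MapsTo φ G F ∧ StrictMonoOn φ G ∧ ∀ g ∈ G, φ g ≤ g

theorem isSpread_of_subset (h : G ⊆ F) : IsSpread F G :=
  ⟨id, h, strictMonoOn_id, fun _ _ => le_rfl⟩

theorem isSpread_image {ι : Type*} [LinearOrder ι] {s : Finset ι} {μ ν : ι → ℕ+}
    (hν : StrictMonoOn ν s) (hμ : StrictMonoOn μ s) (hle : ∀ i ∈ s, ν i ≤ μ i) :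
    IsSpread (s.image ν) (s.image μ) := by
  rcases s.eq_empty_or_nonempty with rfl | ⟨i₀, -⟩
  · exact isSpread_of_subset (by simp)
  have : Nonempty ι := ⟨i₀⟩
  have hinv : ∀ i ∈ s, Function.invFunOn μ s (μ i) = i := fun i hi =>
    hμ.injOn.leftInvOn_invFunOn hi
  refine ⟨ν ∘ Function.invFunOn μ s, ?_, ?_, ?_⟩ <;>
    simp only [Set.MapsTo, StrictMonoOn, Finset.coe_image, Set.forall_mem_image,
      Finset.forall_mem_image, Function.comp_apply, Finset.mem_coe]
  · intro i hi
    rw [hinv i hi]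
    exact Set.mem_image_of_mem ν hi
  · intro i hi j hj hij
    rw [hinv i hi, hinv j hj]
    exact hν hi hj ((hμ.lt_iff_lt hi hj).mp hij)
  · intro i hi
    rw [hinv i hi]
    exact hle i hi

theorem mem_of_isSpread (hF : F ∈ Schreier n) (hFG : IsSpread F G) : G ∈ Schreier n := by
  obtain ⟨φ, hmaps, hφ, hle⟩ := hFG
  induction n generalizing F G with
  | zero => exact (Finset.card_le_card_of_injOn φ hmaps hφ.injOn).trans hF
  | succ n ih =>
    obtain ⟨d, t, h⟩ := mem_succ_iff.mp hF
    refine mem_succ_iff.mpr ⟨d, t ∘ φ, h.monotoneOn.comp hφ.monotoneOn hmaps,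
      fun a ha => h.lt _ (hmaps ha), fun a ha => (h.le _ (hmaps ha)).trans (hle a ha),
      fun i => ih (h.fiber_mem i) (fun a ha => ?_) (hφ.mono (Finset.filter_subset _ _))
        fun a ha => hle a (Finset.filter_subset _ _ ha)⟩
    simp only [Function.comp_apply, Finset.coe_filter, Set.mem_ofPred_eq] at ha ⊢
    exact ⟨hmaps ha.1, ha.2⟩

theorem mem_of_subset (hF : F ∈ Schreier n) (h : G ⊆ F) : G ∈ Schreier n :=
  mem_of_isSpread hF (isSpread_of_subset h)

theorem subset_succ (n : ℕ) : Schreier n ⊆ Schreier (n + 1) := fun F hF =>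
  mem_succ_iff.mpr ⟨1, 0, monotoneOn_const, by simp, fun a _ => a.pos,
    fun _ => mem_of_subset hF (Finset.filter_subset _ _)⟩

theorem mem_of_card_le_one (h : #F ≤ 1) : F ∈ Schreier n :=
  monotone_nat_of_le_succ subset_succ n.zero_le h

theorem mem_of_card_le (hn : 1 ≤ n) (h : ∀ a ∈ F, #F ≤ a) : F ∈ Schreier n :=
  monotone_nat_of_le_succ subset_succ hn h

theorem eq_singleton_one_of_mem (hF : F ∈ Schreier n) (h1 : 1 ∈ F) : F = {1} := by
  induction n with
  | zero =>
    obtain ⟨a, ha⟩ := Finset.card_le_one_iff_subset_singleton.mp hF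
    obtain rfl : 1 = a := by simpa using ha h1
    exact ha.antisymm (by simpa using h1)
  | succ n ih =>
    obtain ⟨d, t, h⟩ := mem_succ_iff.mp hF
    have hd : d ≤ 1 := h.le 1 h1
    refine ih ?_
    convert h.fiber_mem 0
    exact (Finset.filter_true_of_mem fun a ha => by have := h.lt a ha; lia).symm

theorem insert_mem_of_isSpread {i j : ℕ+} (hF : F ∈ Schreier (n + 1)) (hFG : IsSpread F G)
    (hi : i ∈ F) (hij : i < j) (hjG : ∀ g ∈ G, j < g) : insert j G ∈ Schreier (n + 1) := by
  obtain ⟨φ, hmaps, hφ, hle⟩ := hFG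
  obtain ⟨d, t, h⟩ := mem_succ_iff.mp hF
  have hdj : d + 1 ≤ j := (h.le i hi).trans_lt (PNat.coe_lt_coe _ _ |>.mpr hij)
  let t' : ℕ+ → ℕ := fun a => if a ≤ j then 0 else t (φ a) + 1
  have htj : t' j = 0 := by simp [t']
  have htG : ∀ b ∈ G, t' b = t (φ b) + 1 := fun b hb => by simp [t', hjG b hb]
  have htφ : MonotoneOn (t ∘ φ) G := h.monotoneOn.comp hφ.monotoneOn hmaps
  refine mem_succ_iff.mpr ⟨d + 1, t', ?_, ?_, ?_, fun r => ?_⟩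
  · intro a ha b hb hab
    rcases Finset.mem_insert.mp ha with rfl | haG
    · simp [htj]
    rcases Finset.mem_insert.mp hb with rfl | hbG
    · exact absurd (hjG a haG) hab.not_gt
    rw [htG a haG, htG b hbG]
    exact Nat.succ_le_succ (htφ haG hbG hab)
  · simp only [Finset.forall_mem_insert, htj]
    exact ⟨d.succ_pos, fun b hb => htG b hb ▸ Nat.succ_lt_succ (h.lt _ (hmaps hb))⟩
  · simp only [Finset.forall_mem_insert]
    exact ⟨hdj, fun b hb => hdj.trans (PNat.coe_le_coe _ _ |>.mpr (hjG b hb).le)⟩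
  · rw [Finset.filter_insert, htj, Finset.filter_congr fun b hb => by rw [htG b hb]]
    cases r with
    | zero => exact mem_of_card_le_one (by simp)
    | succ r =>
      refine mem_of_isSpread (h.fiber_mem r) ⟨φ, ?_, ?_, ?_⟩ <;>
        simp_all [Set.MapsTo, StrictMonoOn]

theorem insert_mem_succ {B : Finset ℕ+} {j : ℕ+} (hB : B ∈ Schreier n) (hj : 2 ≤ j)
    (hjB : ∀ b ∈ B, j < b) : insert j B ∈ Schreier (n + 1) := by
  have hj' : (2 : ℕ) ≤ j := hj
  have hjB' : ∀ b ∈ B, (2 : ℕ) ≤ b := fun b hb => hj'.trans (hjB b hb).le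
  refine mem_succ_iff.mpr ⟨2, fun a => if a ≤ j then 0 else 1, ?_, ?_, ?_, fun i => ?_⟩
  · intro a _ b _ hab
    grind
  · intro a _
    grind
  · simpa using ⟨hj', hjB'⟩
  · rw [Finset.filter_insert, if_pos le_rfl,
      Finset.filter_congr fun b hb => by rw [if_neg (hjB b hb).not_ge]]
    rcases eq_or_ne i 0 with rfl | hi
    · exact mem_of_card_le_one (by simp)
    · rw [if_neg hi.symm]
      exact mem_of_subset hB (Finset.filter_subset _ _)

theorem IsBlockLabelling.lt_of_image_Ico_notMem {d : ℕ} {t : ℕ+ → ℕ} {c : ℕ → ℕ+}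
    {p q : ℕ} (h : IsBlockLabelling n F d t) (hc : Monotone c) (hpq : p ≤ q)
    (hF : ∀ r ∈ Finset.Icc p q, c r ∈ F) (hn : (Finset.Ico p q).image c ∉ Schreier n) :
    t (c p) < t (c q) := by
  have hp := hF p (Finset.left_mem_Icc.mpr hpq)
  have hq := hF q (Finset.right_mem_Icc.mpr hpq)
  refine lt_of_le_of_ne (h.monotoneOn hp hq (hc hpq)) fun heq => hn ?_
  refine mem_of_subset (h.fiber_mem (t (c p))) (Finset.image_subset_iff.mpr fun r hr => ?_)
  obtain ⟨hpr, hrq⟩ := Finset.mem_Ico.mp hr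
  have hr' := hF r (Finset.mem_Icc.mpr ⟨hpr, hrq.le⟩)
  refine Finset.mem_filter.mpr ⟨hr', le_antisymm ?_ (h.monotoneOn hp hr' (hc hpr))⟩
  exact heq ▸ h.monotoneOn hr' hq (hc hrq.le)

theorem exists_image_Ico_notMem (n : ℕ) {c : ℕ → ℕ+} (hc : StrictMono c) (p : ℕ) :
    ∃ q, (Finset.Ico p q).image c ∉ Schreier n := by
  induction n generalizing p with
  | zero =>
    refine ⟨p + 2, ?_⟩
    change ¬ #((Finset.Ico p (p + 2)).image c) ≤ 1
    rw [Finset.card_image_of_injective _ hc.injective]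
    simp
  | succ n ih =>
    choose next hnext using ih
    have hlt : ∀ p, p < next p := fun p => lt_of_not_ge fun h => hnext p <| by
      rw [Finset.Ico_eq_empty h.not_gt, Finset.image_empty]
      exact empty_mem n
    let P : ℕ → ℕ := fun a => next^[a] p
    have hP : ∀ a, P (a + 1) = next (P a) := fun a => Function.iterate_succ_apply' next a p
    have hPmono : StrictMono P := strictMono_nat_of_lt_succ fun a => hP a ▸ hlt _
    refine ⟨P (c p + 1), fun hmem => ?_⟩
    obtain ⟨d, t, h⟩ := mem_succ_iff.mp hmem
    have hF : ∀ r, p ≤ r → r < P (c p + 1) → c r ∈ (Finset.Ico p (P (c p + 1))).image c :=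
      fun r hpr hr => Finset.mem_image_of_mem c (Finset.mem_Ico.mpr ⟨hpr, hr⟩)
    have hpP : ∀ a, p ≤ P a := fun a => hPmono.monotone a.zero_le
    have ht : ∀ a : ℕ, a ≤ (c p : ℕ) → a ≤ t (c (P a)) := by
      intro a ha
      induction a with
      | zero => exact Nat.zero_le _
      | succ a iha =>
        refine (iha (by lia)).trans_lt (h.lt_of_image_Ico_notMem hc.monotone
          (hPmono.monotone a.le_succ) (fun r hr => ?_) (hP a ▸ hnext _))
        obtain ⟨har, hra⟩ := Finset.mem_Icc.mp hr
        exact hF r ((hpP a).trans har) (hra.trans_lt (hPmono (by lia)))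
    have hd := h.lt _ (hF _ (hpP (c p)) (hPmono (Nat.lt_succ_self _)))
    have hd' := h.le _ (hF p le_rfl ((hpP 0).trans_lt (hPmono (Nat.succ_pos _))))
    exact (hd.trans_le hd').not_ge (ht (c p) le_rfl)

theorem exists_insert_image_range_maximal {c : ℕ → ℕ+} (hc : StrictMono c) {i : ℕ+} (hi : 2 ≤ i)
    (hic : i < c 0) {k : ℕ} (hk : k ≤ c 0) :
    ∃ q, k ≤ q ∧ insert i ((Finset.range q).image c) ∈ Schreier (n + 2) ∧
      insert i ((Finset.range (q + 1)).image c) ∉ Schreier (n + 2) := by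
  by_contra! hstep
  have hc0 : ∀ r, c 0 ≤ c r := fun r => hc.monotone r.zero_le
  have hbase : insert i ((Finset.range k).image c) ∈ Schreier (n + 2) := by
    refine insert_mem_succ (mem_of_card_le (Nat.le_add_left 1 n) ?_) hi ?_ <;>
      simp only [Finset.forall_mem_image]
    · exact fun r _ => Finset.card_image_le.trans <| (Finset.card_range k).trans_le <|
        hk.trans <| PNat.coe_le_coe _ _ |>.mpr (hc0 r)
    · exact fun r _ => hic.trans_le (hc0 r)
  obtain ⟨q, hq⟩ := exists_image_Ico_notMem (n + 2) hc 0
  have hall : insert i ((Finset.range (max k q)).image c) ∈ Schreier (n + 2) :=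
    Nat.le_induction hbase hstep _ (le_max_left k q)
  refine hq (mem_of_subset hall ((Finset.image_subset_image ?_).trans (Finset.subset_insert i _)))
  rw [← Finset.range_eq_Ico]
  exact Finset.range_mono (le_max_right k q)

theorem exists_interlaced_seq {σ : ℕ+ → ℕ+} (hσ : Function.Injective σ) (M : ℕ+) :
    ∃ b : ℕ → ℕ+, StrictMono b ∧ StrictMono (σ ∘ b) ∧ (∀ r, σ (b r) < b (r + 1)) ∧
      ∀ r, M < b r ∧ M < σ (b r) := by
  obtain ⟨b, hM, hb⟩ := exists_seq_of_forall_finset_exists (fun b => M < b ∧ M < σ b)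
    (fun a b => max a (σ a) < min b (σ b)) fun s _ => by
      obtain ⟨N, hN⟩ := (insert M (s.image fun a => max a (σ a))).exists_le
      have hfin : (Set.Iic N ∪ σ ⁻¹' Set.Iic N).Finite :=
        (Set.finite_Iic N).union ((Set.finite_Iic N).preimage hσ.injOn)
      obtain ⟨b, hb⟩ := hfin.exists_notMem
      simp only [Set.mem_union, Set.mem_Iic, Set.mem_preimage, not_or, not_le] at hb
      have hMN : M ≤ N := hN M (Finset.mem_insert_self M _)
      exact ⟨b, ⟨hMN.trans_lt hb.1, hMN.trans_lt hb.2⟩, fun a ha =>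
        (hN _ (Finset.mem_insert_of_mem (Finset.mem_image_of_mem _ ha))).trans_lt
          (lt_min hb.1 hb.2)⟩
  simp only [max_lt_iff, lt_min_iff] at hb
  exact ⟨b, fun r s hrs => (hb r s hrs).1.1, fun r s hrs => (hb r s hrs).2.2,
    fun r => (hb r _ r.lt_succ_self).1.2, hM⟩

theorem two_le_apply {k : ℕ} {σ : ℕ+ → ℕ+} (hσ : Function.Injective σ)
    (hS : ∀ A ∈ Schreier (n + 2), k < #A → A.image σ ∈ Schreier (n + 2)) {j : ℕ+}
    (hj : 2 ≤ j) : 2 ≤ σ j := by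
  by_contra! hlt
  have h1 : σ j = 1 := le_antisymm (PNat.lt_add_one_iff.mp hlt) one_le
  let m : ℕ+ := max j k.succPNat
  have hB : Finset.Ioc m (m + m) ∈ Schreier (n + 1) :=
    mem_of_card_le (Nat.le_add_left 1 n) fun a ha => by
      have hma : (m : ℕ) < a := (Finset.mem_Ioc.mp ha).1
      simpa using hma.le
  have hjB : ∀ b ∈ Finset.Ioc m (m + m), j < b := fun b hb =>
    (le_max_left _ _).trans_lt (Finset.mem_Ioc.mp hb).1
  have hcard : #(insert j (Finset.Ioc m (m + m))) = m + 1 := by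
    rw [Finset.card_insert_of_notMem fun h => lt_irrefl j (hjB j h)]
    simp
  have hkm : k < m := Nat.succ_le_iff.mp (PNat.coe_le_coe k.succPNat m |>.mpr (le_max_right _ _))
  have hmem := hS _ (insert_mem_succ hB hj hjB) (by lia)
  have hone := eq_singleton_one_of_mem hmem (h1 ▸ Finset.mem_image_of_mem σ (by simp))
  have := congrArg Finset.card hone
  rw [Finset.card_image_of_injective _ hσ, hcard, Finset.card_singleton] at this
  lia

theorem le_apply {k : ℕ} {σ : ℕ+ → ℕ+} (hσ : Function.Injective σ)
    (hS : ∀ A ∈ Schreier (n + 2), k < #A → A.image σ ∈ Schreier (n + 2)) (j : ℕ+) :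
    j ≤ σ j := by
  by_contra! hij
  have hi : 2 ≤ σ j := two_le_apply hσ hS (PNat.add_one_le_iff.mpr (one_le.trans_lt hij))
  obtain ⟨b, hb, hc, hcb, hM⟩ := exists_interlaced_seq hσ (max j k.succPNat)
  have hjb : ∀ r, j < b r := fun r => (le_max_left _ _).trans_lt (hM r).1
  have hjc : ∀ r, j < σ (b r) := fun r => (le_max_left _ _).trans_lt (hM r).2
  have hk : k ≤ σ (b 0) :=
    k.le_succ.trans (PNat.coe_le_coe k.succPNat _ |>.mpr ((le_max_right _ _).trans (hM 0).2.le))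
  obtain ⟨q, hkq, hq, hq'⟩ :=
    exists_insert_image_range_maximal (n := n) hc hi (hij.trans (hjc 0)) hk
  let ν : ℕ → ℕ+ := fun r => r.casesOn (σ j) (σ ∘ b)
  have hν : StrictMono ν := strictMono_nat_of_lt_succ fun r => by
    cases r
    exacts [hij.trans (hjc 0), hc (Nat.lt_succ_self _)]
  have hνb : ∀ r, ν r ≤ b r := fun r => by
    cases r
    exacts [(hij.trans (hjb 0)).le, (hcb _).le]
  have hνq : insert (σ j) ((Finset.range q).image (σ ∘ b)) = (Finset.range (q + 1)).image ν := by
    rw [Finset.range_add_one', Finset.image_insert, Finset.map_eq_image, Finset.image_image]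
    rfl
  have hA : insert j ((Finset.range (q + 1)).image b) ∈ Schreier (n + 2) :=
    insert_mem_of_isSpread (hνq ▸ hq)
      (isSpread_image (hν.strictMonoOn _) (hb.strictMonoOn _) fun r _ => hνb r)
      (Finset.mem_image_of_mem ν (Finset.mem_range.mpr q.succ_pos)) hij
      (Finset.forall_mem_image.mpr fun r _ => hjb r)
  refine hq' ?_
  rw [← Finset.image_image, ← Finset.image_insert]
  refine hS _ hA ?_
  rw [Finset.card_insert_of_notMem, Finset.card_image_of_injective _ hb.injective,
    Finset.card_range]
  · lia
  · simpa using fun r _ => (hjb r).ne'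

theorem perm_apply_eq_self {k : ℕ} {σ : Equiv.Perm ℕ+} (hn : 2 ≤ n)
    (hS : ∀ A ∈ Schreier n, k < #A → A.image σ ∈ Schreier n) (j : ℕ+) : σ j = j := by
  obtain ⟨n, rfl⟩ := Nat.exists_eq_add_of_le' hn
  have hle := le_apply σ.injective hS
  induction j using PNat.strongInductionOn with
  | _ j ih =>
    have hj : σ.symm j ≤ j := by simpa using hle (σ.symm j)
    rcases hj.eq_or_lt with h | h
    · exact (σ.symm_apply_eq.mp h).symm
    · exact absurd (by simpa using ih _ h) h.ne'

end Schreier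

/-! ### The Tsirelson norm on `c₀₀` -/

section TsirelsonNorm

variable {θ : ℝ} {S : Set (Finset ℕ+)}

theorem tsProj_apply (E : Finset ℕ+) (x : ℕ+ →₀ ℝ) (i : ℕ+) :
    tsProj E x i = if i ∈ E then x i else 0 := by
  simp [tsProj, Finsupp.filter_apply]

theorem tsProj_empty (x : ℕ+ →₀ ℝ) : tsProj ∅ x = 0 := by
  ext i
  simp [tsProj_apply]

theorem tsProj_inter_support (E : Finset ℕ+) (x : ℕ+ →₀ ℝ) :
    tsProj (E ∩ x.support) x = tsProj E x := by
  ext i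
  by_cases h : x i = 0 <;> simp [tsProj_apply, h]

/-- The `ℓ₁` norm on `c₀₀`. -/
def l1Norm (x : ℕ+ →₀ ℝ) : ℝ := x.sum fun _ c => |c|

theorem l1Norm_nonneg (x : ℕ+ →₀ ℝ) : 0 ≤ l1Norm x :=
  Finset.sum_nonneg fun _ _ => abs_nonneg _

theorem abs_apply_le_l1Norm (x : ℕ+ →₀ ℝ) (i : ℕ+) : |x i| ≤ l1Norm x := by
  by_cases h : i ∈ x.support
  · exact Finset.single_le_sum (f := fun i => |x i|) (fun _ _ => abs_nonneg _) h
  · rw [Finsupp.notMem_support_iff.mp h, abs_zero]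
    exact l1Norm_nonneg x

theorem bddAbove_range_abs (x : ℕ+ →₀ ℝ) : BddAbove (Set.range fun i => |x i|) :=
  ⟨l1Norm x, Set.forall_mem_range.mpr (abs_apply_le_l1Norm x)⟩

namespace TsAdmissible

variable {d : ℕ} {E : Fin d → Finset ℕ+}

theorem eq_of_mem (hE : TsAdmissible S E) {a b : Fin d} {i : ℕ+} (ha : i ∈ E a) (hb : i ∈ E b) :
    a = b := by
  rcases lt_trichotomy a b with h | h | h
  exacts [absurd (hE.2.1 a b h i ha i hb) (lt_irrefl i), h,
    absurd (hE.2.1 b a h i hb i ha) (lt_irrefl i)]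

theorem sum_ite_mem_le (hE : TsAdmissible S E) (i : ℕ+) {r : ℝ} (hr : 0 ≤ r) :
    ∑ a, (if i ∈ E a then r else 0) ≤ r := by
  by_cases h : ∃ a, i ∈ E a
  · obtain ⟨a, ha⟩ := h
    rw [Finset.sum_eq_single a (fun b _ hb => if_neg fun h => hb (hE.eq_of_mem h ha)) (by simp),
      if_pos ha]
  · push Not at h
    simpa [h]

theorem sum_l1Norm_tsProj_le (hE : TsAdmissible S E) (x : ℕ+ →₀ ℝ) :
    ∑ a, l1Norm (tsProj (E a) x) ≤ l1Norm x := by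
  have h : ∀ a, l1Norm (tsProj (E a) x) = ∑ i ∈ x.support, if i ∈ E a then |x i| else 0 := by
    intro a
    rw [l1Norm, Finsupp.sum_of_support_subset (s := x.support) _
      (Finset.filter_subset _ _) _ fun _ _ => abs_zero]
    exact Finset.sum_congr rfl fun i _ => by rw [tsProj_apply, apply_ite abs, abs_zero]
  simp only [h]
  rw [Finset.sum_comm]
  exact Finset.sum_le_sum fun i _ => hE.sum_ite_mem_le i (abs_nonneg _)

end TsAdmissible

theorem tnormAux_nonneg (m : ℕ) (x : ℕ+ →₀ ℝ) : 0 ≤ tnormAux θ S m x := by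
  induction m with
  | zero => exact Real.iSup_nonneg fun _ => abs_nonneg _
  | succ m ih => exact le_max_of_le_left ih

theorem monotone_tnormAux (x : ℕ+ →₀ ℝ) : Monotone fun m => tnormAux θ S m x :=
  monotone_nat_of_le_succ fun _ => le_max_left _ _

theorem tnormAux_le_l1Norm (hθ1 : θ ≤ 1) (m : ℕ) (x : ℕ+ →₀ ℝ) : tnormAux θ S m x ≤ l1Norm x := by
  induction m generalizing x with
  | zero => exact ciSup_le (abs_apply_le_l1Norm x)
  | succ m ih =>
    refine max_le (ih x) (Real.sSup_le ?_ (l1Norm_nonneg x))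
    rintro r ⟨d, E, hE, rfl⟩
    calc θ * ∑ i, tnormAux θ S m (tsProj (E i) x)
        ≤ 1 * ∑ i, tnormAux θ S m (tsProj (E i) x) :=
          mul_le_mul_of_nonneg_right hθ1 (Finset.sum_nonneg fun i _ => tnormAux_nonneg m _)
      _ ≤ ∑ i, l1Norm (tsProj (E i) x) := by
          rw [one_mul]
          exact Finset.sum_le_sum fun i _ => ih _
      _ ≤ l1Norm x := hE.sum_l1Norm_tsProj_le x

theorem mul_sum_tnormAux_le (hθ1 : θ ≤ 1) (m : ℕ) (x : ℕ+ →₀ ℝ) {d : ℕ} {E : Fin d → Finset ℕ+}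
    (hE : TsAdmissible S E) :
    θ * ∑ i, tnormAux θ S m (tsProj (E i) x) ≤ tnormAux θ S (m + 1) x := by
  refine le_max_of_le_right (le_csSup ⟨l1Norm x, ?_⟩ ⟨d, E, hE, rfl⟩)
  rintro r ⟨d, E, hE, rfl⟩
  refine le_trans ?_ (hE.sum_l1Norm_tsProj_le x)
  refine (mul_le_of_le_one_left (Finset.sum_nonneg fun i _ => tnormAux_nonneg m _) hθ1).trans ?_
  exact Finset.sum_le_sum fun i _ => tnormAux_le_l1Norm hθ1 m _

theorem tnormAux_le_tnormAux (hθ0 : 0 ≤ θ) (hθ1 : θ ≤ 1) (m : ℕ) {x y : ℕ+ →₀ ℝ}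
    (h : ∀ i, |x i| ≤ |y i|) : tnormAux θ S m x ≤ tnormAux θ S m y := by
  induction m generalizing x y with
  | zero => exact ciSup_mono (bddAbove_range_abs y) h
  | succ m ih =>
    refine max_le ((ih h).trans (le_max_left _ _)) (Real.sSup_le ?_ (tnormAux_nonneg _ y))
    rintro r ⟨d, E, hE, rfl⟩
    refine le_trans ?_ (mul_sum_tnormAux_le hθ1 m y hE)
    refine mul_le_mul_of_nonneg_left (Finset.sum_le_sum fun a _ => ih fun i => ?_) hθ0
    rw [tsProj_apply, tsProj_apply]
    split_ifs
    exacts [h i, le_rfl]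

theorem bddAbove_range_tnormAux (hθ1 : θ ≤ 1) (x : ℕ+ →₀ ℝ) :
    BddAbove (Set.range fun m => tnormAux θ S m x) :=
  ⟨l1Norm x, Set.forall_mem_range.mpr fun m => tnormAux_le_l1Norm hθ1 m x⟩

theorem tnorm_nonneg (x : ℕ+ →₀ ℝ) : 0 ≤ tnorm θ S x :=
  Real.iSup_nonneg fun m => tnormAux_nonneg m x

theorem tnormAux_le_tnorm (hθ1 : θ ≤ 1) (m : ℕ) (x : ℕ+ →₀ ℝ) : tnormAux θ S m x ≤ tnorm θ S x :=
  le_ciSup (bddAbove_range_tnormAux hθ1 x) m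

theorem tnorm_le_tnorm (hθ0 : 0 ≤ θ) (hθ1 : θ ≤ 1) {x y : ℕ+ →₀ ℝ} (h : ∀ i, |x i| ≤ |y i|) :
    tnorm θ S x ≤ tnorm θ S y :=
  ciSup_mono (bddAbove_range_tnormAux hθ1 y) fun m => tnormAux_le_tnormAux hθ0 hθ1 m h

theorem abs_apply_le_tnorm (hθ1 : θ ≤ 1) (x : ℕ+ →₀ ℝ) (i : ℕ+) : |x i| ≤ tnorm θ S x :=
  (le_ciSup (bddAbove_range_abs x) i).trans (tnormAux_le_tnorm hθ1 0 x)

theorem mul_sum_tnorm_le (hθ1 : θ ≤ 1) (x : ℕ+ →₀ ℝ) {d : ℕ} {E : Fin d → Finset ℕ+}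
    (hE : TsAdmissible S E) :
    θ * ∑ i, tnorm θ S (tsProj (E i) x) ≤ tnorm θ S x :=
  le_of_tendsto' (.const_mul θ <| tendsto_finsetSum _ fun _ _ =>
      tendsto_atTop_ciSup (monotone_tnormAux _) (bddAbove_range_tnormAux hθ1 _))
    fun m => (mul_sum_tnormAux_le hθ1 m x hE).trans (tnormAux_le_tnorm hθ1 _ x)

theorem tnorm_le (hθ0 : 0 ≤ θ) (hθ1 : θ ≤ 1) {x : ℕ+ →₀ ℝ} {C : ℝ} (hC : ∀ i, |x i| ≤ C)
    (hadm : ∀ (d : ℕ) (E : Fin d → Finset ℕ+), TsAdmissible S E →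
      θ * ∑ i, tnorm θ S (tsProj (E i) x) ≤ C) : tnorm θ S x ≤ C := by
  refine ciSup_le fun m => ?_
  induction m with
  | zero => exact ciSup_le hC
  | succ m ih =>
    refine max_le ih (Real.sSup_le ?_ ((abs_nonneg _).trans (hC 1)))
    rintro r ⟨d, E, hE, rfl⟩
    refine le_trans (mul_le_mul_of_nonneg_left ?_ hθ0) (hadm d E hE)
    exact Finset.sum_le_sum fun i _ => tnormAux_le_tnorm hθ1 m _

theorem tnorm_le_l1Norm (hθ1 : θ ≤ 1) (x : ℕ+ →₀ ℝ) : tnorm θ S x ≤ l1Norm x :=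
  ciSup_le fun m => tnormAux_le_l1Norm hθ1 m x

theorem tnorm_zero (hθ1 : θ ≤ 1) : tnorm θ S 0 = 0 :=
  ((tnorm_le_l1Norm hθ1 0).trans_eq Finsupp.sum_zero_index).antisymm (tnorm_nonneg 0)

theorem finite_setOf_admissible_sum {f : (ℕ+ →₀ ℝ) → ℝ} (hf : f 0 = 0) (x : ℕ+ →₀ ℝ) :
    {r | ∃ (d : ℕ) (E : Fin d → Finset ℕ+), TsAdmissible S E ∧
      r = θ * ∑ i, f (tsProj (E i) x)}.Finite := by
  refine (x.support.powerset.powerset.finite_toSet.image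
    fun 𝓔 => θ * ∑ G ∈ 𝓔, f (tsProj G x)).subset ?_
  rintro r ⟨d, E, hE, rfl⟩
  refine ⟨Finset.univ.image fun a => E a ∩ x.support, ?_, ?_⟩
  · simp only [Finset.mem_coe, Finset.mem_powerset, Finset.image_subset_iff]
    exact fun a _ => Finset.inter_subset_right
  · dsimp only
    rw [Finset.sum_image_of_disjoint (g := fun G => f (tsProj G x)) (by
      simp [tsProj_empty, hf])]
    · simp only [tsProj_inter_support]
    · exact fun a _ b _ hab => Finset.disjoint_left.mpr fun i hia hib => hab <|
        hE.eq_of_mem (Finset.mem_inter.mp hia).1 (Finset.mem_inter.mp hib).1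

theorem tnorm_attained (hθ0 : 0 ≤ θ) (hθ1 : θ ≤ 1) (x : ℕ+ →₀ ℝ) :
    (∃ i, |x i| = tnorm θ S x) ∨ ∃ (d : ℕ) (E : Fin d → Finset ℕ+), TsAdmissible S E ∧
      θ * ∑ i, tnorm θ S (tsProj (E i) x) = tnorm θ S x := by
  have hcoord : (Set.range fun i => |x i|).Finite :=
    Set.range_comp abs x ▸ x.finite_range.image abs
  have hfin := hcoord.union <|
    finite_setOf_admissible_sum (θ := θ) (S := S) (f := tnorm θ S) (tnorm_zero hθ1) x
  obtain ⟨v, hv, hmax⟩ := Set.exists_max_image _ id hfin ⟨|x 1|, Or.inl ⟨1, rfl⟩⟩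
  have hle : tnorm θ S x ≤ v :=
    tnorm_le hθ0 hθ1 (fun i => hmax _ (Or.inl ⟨i, rfl⟩))
      fun d E hE => hmax _ (Or.inr ⟨d, E, hE, rfl⟩)
  rcases hv with ⟨i, rfl⟩ | ⟨d, E, hE, rfl⟩
  · exact Or.inl ⟨i, (abs_apply_le_tnorm hθ1 x i).antisymm hle⟩
  · exact Or.inr ⟨d, E, hE, (mul_sum_tnorm_le hθ1 x hE).antisymm hle⟩

end TsirelsonNorm

namespace TsAdmissible

theorem singletons {S : Set (Finset ℕ+)} {A : Finset ℕ+} (hA : A ∈ S) :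
    TsAdmissible S fun a : Fin #A => {A.orderEmbOfFin rfl a} := by
  refine ⟨fun a => Finset.singleton_nonempty _, ?_, A.orderEmbOfFin rfl, ?_, ?_⟩
  · simp
  · simp
  · simpa using hA

variable {n d : ℕ} {E E' : Fin d → Finset ℕ+}

theorem of_spread (hE : TsAdmissible (Schreier n) E) (hne : ∀ a, (E' a).Nonempty)
    (hlt : ∀ a b : Fin d, a < b → ∀ i ∈ E' a, ∀ j ∈ E' b, i < j)
    (hle : ∀ a, ∃ i ∈ E a, ∀ j ∈ E' a, i ≤ j) : TsAdmissible (Schreier n) E' := by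
  obtain ⟨_, hElt, μ, hμ, hS⟩ := hE
  refine ⟨hne, hlt, fun a => (E' a).min' (hne a), fun a => Finset.isLeast_min' _ _,
    Schreier.mem_of_isSpread hS (Schreier.isSpread_image ?_ ?_ fun a _ => ?_)⟩
  · exact fun a _ b _ hab => hElt a b hab _ (hμ a).1 _ (hμ b).1
  · exact fun a _ b _ hab => hlt a b hab _ (Finset.min'_mem _ _) _ (Finset.min'_mem _ _)
  · obtain ⟨i, hi, hij⟩ := hle a
    exact ((hμ a).2 hi).trans (hij _ (Finset.min'_mem _ _))

theorem eq_of_one_mem (hE : TsAdmissible (Schreier n) E) {a : Fin d} (ha : 1 ∈ E a) (b : Fin d) :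
    b = a := by
  obtain ⟨μ, hμ, hS⟩ := hE.2.2
  have hμa : μ a = 1 := le_antisymm ((hμ a).2 ha) one_le
  have hmem : ∀ b, μ b ∈ Finset.univ.image μ := fun b =>
    Finset.mem_image_of_mem μ (Finset.mem_univ b)
  have hμb : μ b = 1 := by
    simpa [Schreier.eq_singleton_one_of_mem hS (hμa ▸ hmem a)] using hmem b
  exact hE.eq_of_mem (hμb ▸ (hμ b).1) ha

theorem snoc_tail {E : Fin (d + 1) → Finset ℕ+} (hE : TsAdmissible (Schreier n) E) {G : Finset ℕ+}
    (hG : G.Nonempty) (hEG : ∀ a, ∀ i ∈ E a, ∀ j ∈ G, i < j) :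
    TsAdmissible (Schreier n) (Fin.snoc (α := fun _ => Finset ℕ+) (Fin.tail E) G) := by
  obtain ⟨hne, hlt, -⟩ := id hE
  refine hE.of_spread (fun a => ?_) (fun a b => ?_) fun a => ?_
  · induction a using Fin.lastCases with
    | last => simpa using hG
    | cast a => simpa [Fin.tail] using hne a.succ
  · induction b using Fin.lastCases with
    | last =>
      induction a using Fin.lastCases with
      | last => simp
      | cast a => simpa [Fin.tail] using hEG a.succ
    | cast b =>
      induction a using Fin.lastCases with
      | last => simp [(Fin.castSucc_lt_last b).not_gt]
      | cast a => simpa [Fin.tail] using fun hab => hlt a.succ b.succ (Fin.succ_lt_succ_iff.mpr hab)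
  · obtain ⟨i, hi⟩ := hne a
    refine ⟨i, hi, ?_⟩
    induction a using Fin.lastCases with
    | last => simpa using fun j hj => (hEG _ i hi j hj).le
    | cast a => simpa [Fin.tail] using fun j hj => (hlt _ _ Fin.castSucc_lt_succ i hi j hj).le

theorem mem_of_card_inter_le_one (hE : TsAdmissible (Schreier n) E) {A : Finset ℕ+}
    (hcov : A ⊆ Finset.univ.biUnion E) (hcard : ∀ a, #(E a ∩ A) ≤ 1) : A ∈ Schreier n := by
  obtain ⟨-, hlt, μ, hμ, hS⟩ := id hE
  have hmem : ∀ i : A, ∃ a, (i : ℕ+) ∈ E a := fun i => by simpa using hcov i.2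
  choose t ht using hmem
  have htmono : StrictMono t := fun i j hij => by
    by_contra! h
    rcases h.lt_or_eq with h | h
    · exact (hlt _ _ h _ (ht j) _ (ht i)).not_gt hij
    · exact hij.ne (Subtype.ext (Finset.card_le_one.mp (hcard (t i)) _
        (Finset.mem_inter.mpr ⟨ht i, i.2⟩) _ (Finset.mem_inter.mpr ⟨h ▸ ht j, j.2⟩)))
  have himage : Finset.univ.image (μ ∘ t) ⊆ Finset.univ.image μ := by
    simp only [Finset.image_subset_iff, Finset.mem_univ, Finset.mem_image, true_and,
      Function.comp_apply, exists_apply_eq_apply, implies_true]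
  have hspread := Schreier.isSpread_image (s := Finset.univ) (ν := μ ∘ t) (μ := ((↑) : A → ℕ+))
    (fun i _ j _ hij => hlt _ _ (htmono hij) _ (hμ _).1 _ (hμ _).1)
    (fun i _ j _ hij => hij) fun i _ => (hμ _).2 (ht i)
  simpa using Schreier.mem_of_isSpread (Schreier.mem_of_subset hS himage) hspread

end TsAdmissible

/-! ### Isometries between subsets and the linear extension from the unit ball -/

/-- `f` and `g` restrict to mutually inverse isometries between the sets `A` and `B`. Using maps of
the ambient spaces, instead of an isometric equivalence of subtypes, keeps restriction and
composition free of coercions. -/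
structure IsometryPairOn {E F : Type*} [PseudoMetricSpace E] [PseudoMetricSpace F]
    (f : E → F) (g : F → E) (A : Set E) (B : Set F) : Prop where
  mapsTo : Set.MapsTo f A B
  mapsTo_symm : Set.MapsTo g B A
  invOn : Set.InvOn g f A B
  dist_eq : ∀ x ∈ A, ∀ y ∈ A, dist (f x) (f y) = dist x y

namespace IsometryPairOn

theorem subset_closedBall_union {E F : Type*} [PseudoMetricSpace E]
    [PseudoMetricSpace F] {f : E → F} {g : F → E} {A : Set E} {B : Set F}
    (h : IsometryPairOn f g A B) {x y : E} (hx : x ∈ A) (hy : y ∈ A) {r : ℝ}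
    (hA : A ⊆ Metric.closedBall x r ∪ Metric.closedBall y r) :
    B ⊆ Metric.closedBall (f x) r ∪ Metric.closedBall (f y) r := by
  intro z hz
  have hgz := h.mapsTo_symm hz
  rw [← h.invOn.2 hz, Set.mem_union, Metric.mem_closedBall, Metric.mem_closedBall,
    h.dist_eq _ hgz _ hx, h.dist_eq _ hgz _ hy]
  exact hA hgz

theorem exists_of_isometryEquiv {E F : Type*} [PseudoMetricSpace E]
    [PseudoMetricSpace F] [Nonempty E] [Nonempty F] {A : Set E} {B : Set F} (u : A ≃ᵢ B) :
    ∃ f g, IsometryPairOn f g A B ∧ ∀ x : A, f x = u x := by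
  set f : E → F := Function.extend (↑) (fun x : A => (u x : F)) fun _ => Classical.arbitrary F
  set g : F → E := Function.extend (↑) (fun y : B => (u.symm y : E)) fun _ => Classical.arbitrary E
  have hf : ∀ x : A, f x = u x := fun x => Subtype.val_injective.extend_apply _ _ x
  have hg : ∀ y : B, g y = u.symm y := fun y => Subtype.val_injective.extend_apply _ _ y
  refine ⟨f, g, ⟨fun x hx => ?_, fun y hy => ?_, ⟨fun x hx => ?_, fun y hy => ?_⟩,
    fun x hx y hy => ?_⟩, hf⟩
  · exact hf ⟨x, hx⟩ ▸ (u ⟨x, hx⟩).2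
  · exact hg ⟨y, hy⟩ ▸ (u.symm ⟨y, hy⟩).2
  · rw [hf ⟨x, hx⟩, hg, u.symm_apply_apply]
  · rw [hg ⟨y, hy⟩, hf, u.apply_symm_apply]
  · rw [hf ⟨x, hx⟩, hf ⟨y, hy⟩]
    exact u.dist_eq ⟨x, hx⟩ ⟨y, hy⟩

section Metric

variable {E F G : Type*} [PseudoMetricSpace E] [PseudoMetricSpace F] [PseudoMetricSpace G]
  {f : E → F} {g : F → E} {A : Set E} {B : Set F}

theorem symm (h : IsometryPairOn f g A B) : IsometryPairOn g f B A where
  mapsTo := h.mapsTo_symm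
  mapsTo_symm := h.mapsTo
  invOn := h.invOn.symm
  dist_eq x hx y hy := by
    rw [← h.dist_eq _ (h.mapsTo_symm hx) _ (h.mapsTo_symm hy), h.invOn.2 hx, h.invOn.2 hy]

theorem trans {f' : F → G} {g' : G → F} {C : Set G} (h : IsometryPairOn f g A B)
    (h' : IsometryPairOn f' g' B C) : IsometryPairOn (f' ∘ f) (g ∘ g') A C where
  mapsTo := h'.mapsTo.comp h.mapsTo
  mapsTo_symm := h.mapsTo_symm.comp h'.mapsTo_symm
  invOn := h.invOn.comp h'.invOn h.mapsTo h'.mapsTo_symm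
  dist_eq x hx y hy := (h'.dist_eq _ (h.mapsTo hx) _ (h.mapsTo hy)).trans (h.dist_eq x hx y hy)

theorem inter {A' : Set E} {B' : Set F} (h : IsometryPairOn f g A B)
    (h' : IsometryPairOn f g A' B') : IsometryPairOn f g (A ∩ A') (B ∩ B') where
  mapsTo := h.mapsTo.inter_inter h'.mapsTo
  mapsTo_symm := h.mapsTo_symm.inter_inter h'.mapsTo_symm
  invOn := h.invOn.mono Set.inter_subset_left Set.inter_subset_left
  dist_eq x hx y hy := h.dist_eq x hx.1 y hy.1

theorem inter_closedBall (h : IsometryPairOn f g A B) {x : E} (hx : x ∈ A) (r : ℝ) :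
    IsometryPairOn f g (A ∩ Metric.closedBall x r) (B ∩ Metric.closedBall (f x) r) where
  mapsTo y hy := ⟨h.mapsTo hy.1, (h.dist_eq y hy.1 x hx).trans_le hy.2⟩
  mapsTo_symm y hy := ⟨h.mapsTo_symm hy.1, by
    rw [Metric.mem_closedBall, ← h.dist_eq _ (h.mapsTo_symm hy.1) x hx, h.invOn.2 hy.1]
    exact hy.2⟩
  invOn := h.invOn.mono Set.inter_subset_left Set.inter_subset_left
  dist_eq y hy z hz := h.dist_eq y hy.1 z hz.1

end Metric

section Center

variable {E F : Type*} [NormedAddCommGroup E] [NormedSpace ℝ E]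
  [NormedAddCommGroup F] [NormedSpace ℝ F]
  {f : E → F} {g : F → E} {A : Set E} {B : Set F} {m : E} {m' : F}

local notation "ρ" => AffineIsometryEquiv.pointReflection ℝ

theorem pointReflection (hA : Set.MapsTo (ρ m) A A) : IsometryPairOn (ρ m) (ρ m) A A where
  mapsTo := hA
  mapsTo_symm := hA
  invOn := ⟨fun x _ => AffineIsometryEquiv.pointReflection_involutive m x,
    fun x _ => AffineIsometryEquiv.pointReflection_involutive m x⟩
  dist_eq x _ y _ := (ρ m).dist_map x y

/- Väisälä's argument: replacing `f` by the commutator-like isometry `ρ ∘ f⁻¹ ∘ ρ ∘ f` doubles the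
displacement of the center, which is bounded by the diameter of `A`. -/
theorem map_center_eq_self {f g : E → E} (h : IsometryPairOn f g A A)
    (hA : Bornology.IsBounded A) (hm : m ∈ A) (hρ : Set.MapsTo (ρ m) A A) : f m = m := by
  have displacement_le : ∀ (j : ℕ) (f g : E → E), IsometryPairOn f g A A →
      dist (f m) m ≤ Metric.diam A * (1 / 2) ^ j := by
    intro j
    induction j with
    | zero =>
      intro f g h
      simpa using Metric.dist_le_diam_of_mem hA (h.mapsTo hm) hm
    | succ j ih =>
      intro f g h
      have hfm : ρ m (f m) ∈ A := hρ (h.mapsTo hm)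
      have hdouble : dist (ρ m (g (ρ m (f m)))) m = 2 * dist (f m) m := by
        rw [AffineIsometryEquiv.dist_pointReflection_fixed, ← h.dist_eq _ (h.mapsTo_symm hfm) _ hm,
          h.invOn.2 hfm, AffineIsometryEquiv.dist_pointReflection_self_real, dist_comm m]
      have hle := ih _ _ (((h.trans (pointReflection hρ)).trans h.symm).trans (pointReflection hρ))
      rw [Function.comp_apply, Function.comp_apply, Function.comp_apply, hdouble] at hle
      rw [pow_succ]
      linarith
  have hlim : Filter.Tendsto (fun j : ℕ => Metric.diam A * (1 / 2) ^ j) Filter.atTop (nhds 0) := by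
    simpa using (tendsto_pow_atTop_nhds_zero_of_lt_one (r := (1 / 2 : ℝ)) (by norm_num)
      (by norm_num)).const_mul (Metric.diam A)
  exact dist_le_zero.mp (ge_of_tendsto' hlim fun j => displacement_le j f g h)

theorem map_center (h : IsometryPairOn f g A B) (hA : Bornology.IsBounded A) (hm : m ∈ A)
    (hρA : Set.MapsTo (ρ m) A A) (hρB : Set.MapsTo (ρ m') B B) : f m = m' := by
  have hfix := map_center_eq_self ((h.trans (pointReflection hρB)).trans h.symm) hA hm hρA
  have hfm : ρ m' (f m) ∈ B := hρB (h.mapsTo hm)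
  have := h.invOn.2 hfm
  rw [Function.comp_apply, Function.comp_apply] at hfix
  rw [hfix] at this
  exact ((AffineIsometryEquiv.pointReflection_fixed_iff (𝕜 := ℝ)).mp this.symm)

end Center

section Midpoint

variable {E F : Type*} [NormedAddCommGroup E] [NormedSpace ℝ E]
  [NormedAddCommGroup F] [NormedSpace ℝ F] {f : E → F} {g : F → E} {A : Set E} {B : Set F}

theorem mapsTo_pointReflection_midpoint (a b : E) (r : ℝ) :
    Set.MapsTo (AffineIsometryEquiv.pointReflection ℝ (midpoint ℝ a b))
      (Metric.closedBall a r ∩ Metric.closedBall b r)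
      (Metric.closedBall a r ∩ Metric.closedBall b r) := by
  have hdist := (AffineIsometryEquiv.pointReflection ℝ (midpoint ℝ a b)).dist_map
  rintro z ⟨hza, hzb⟩
  constructor
  · simpa [← hdist z b] using hzb
  · simpa [← hdist z a] using hza

/- `midpoint a b` is the center of symmetry of a lens around `a` and `b`, which `f` carries to the
corresponding lens around `f a` and `f b`. -/
theorem map_midpoint (h : IsometryPairOn f g A B) {a b : E} (hb : b ∈ A)
    (hA : Metric.closedBall a (dist a b / 2) ⊆ A)
    (hB : Metric.closedBall (f a) (dist a b / 2) ⊆ B) :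
    f (midpoint ℝ a b) = midpoint ℝ (f a) (f b) := by
  set r := dist a b / 2 with hr
  have hr0 : 0 ≤ r := by positivity
  have ha : a ∈ A := hA (Metric.mem_closedBall_self hr0)
  have hlens := (h.inter_closedBall ha r).inter (h.inter_closedBall hb r)
  rw [Set.inter_eq_right.mpr hA, Set.inter_eq_right.mpr hB, ← Set.inter_assoc, ← Set.inter_assoc,
    Set.inter_eq_left.mpr hA, Set.inter_eq_left.mpr hB] at hlens
  refine hlens.map_center (Metric.isBounded_closedBall.subset Set.inter_subset_left) ?_
    (mapsTo_pointReflection_midpoint a b r) (mapsTo_pointReflection_midpoint (f a) (f b) r)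
  constructor <;> simp [hr, inv_mul_eq_div]

end Midpoint

section UnitBall

variable {E F : Type*} [NormedAddCommGroup E] [NormedSpace ℝ E]
  [NormedAddCommGroup F] [NormedSpace ℝ F] {f : E → F} {g : F → E}

theorem map_inv_two_pow_smul
    (h : IsometryPairOn f g (Metric.closedBall 0 1) (Metric.closedBall 0 1)) (h0 : f 0 = 0) (j : ℕ)
    {x : E} (hx : x ∈ Metric.closedBall 0 1) :
    f (((2 : ℝ) ^ j)⁻¹ • x) = ((2 : ℝ) ^ j)⁻¹ • f x := by
  have map_inv_two_smul (y : E) (hy : y ∈ Metric.closedBall 0 1) :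
      f ((2 : ℝ)⁻¹ • y) = (2 : ℝ)⁻¹ • f y := by
    have hr : dist 0 y / 2 ≤ 1 := by
      rw [dist_zero_left]
      linarith [mem_closedBall_zero_iff.mp hy]
    simpa [midpoint_eq_smul_add, h0] using h.map_midpoint hy
      (Metric.closedBall_subset_closedBall hr) (h0 ▸ Metric.closedBall_subset_closedBall hr)
  induction j with
  | zero => simp
  | succ j ih =>
    have hmem : ((2 : ℝ) ^ j)⁻¹ • x ∈ Metric.closedBall (0 : E) 1 :=
      (convex_closedBall (0 : E) 1).smul_mem_of_zero_mem (by simp) hx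
        ⟨by positivity, inv_le_one_of_one_le₀ (one_le_pow₀ one_le_two)⟩
    rw [pow_succ', mul_inv, mul_smul, map_inv_two_smul _ hmem, ih, mul_smul]

/-- The extension of a map of unit balls to the whole space that is homogeneous under powers of `2`;
the exponent `⌈‖x‖⌉₊` is one for which `x / 2 ^ ⌈‖x‖⌉₊` lies in the unit ball. -/
def dyadicExtension (f : E → F) (x : E) : F :=
  (2 : ℝ) ^ ⌈‖x‖⌉₊ • f (((2 : ℝ) ^ ⌈‖x‖⌉₊)⁻¹ • x)

theorem inv_two_pow_smul_mem_closedBall {x : E} {j : ℕ} (hj : ⌈‖x‖⌉₊ ≤ j) :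
    ((2 : ℝ) ^ j)⁻¹ • x ∈ Metric.closedBall (0 : E) 1 := by
  have hx : ‖x‖ ≤ 2 ^ j := (Nat.ceil_le.mp hj).trans (by exact_mod_cast Nat.lt_two_pow_self.le)
  rw [mem_closedBall_zero_iff, norm_smul, Real.norm_of_nonneg (by positivity)]
  exact inv_mul_le_one_of_le₀ hx (by positivity)

theorem dyadicExtension_eq
    (h : IsometryPairOn f g (Metric.closedBall 0 1) (Metric.closedBall 0 1)) (h0 : f 0 = 0)
    {x : E} {j : ℕ} (hj : ⌈‖x‖⌉₊ ≤ j) :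
    dyadicExtension f x = (2 : ℝ) ^ j • f (((2 : ℝ) ^ j)⁻¹ • x) := by
  obtain ⟨i, rfl⟩ := Nat.exists_eq_add_of_le hj
  rw [pow_add, mul_inv_rev, mul_smul, mul_smul _⁻¹,
    h.map_inv_two_pow_smul h0 i (inv_two_pow_smul_mem_closedBall le_rfl),
    smul_inv_smul₀ (by positivity), dyadicExtension]

theorem dyadicExtension_eq_self
    (h : IsometryPairOn f g (Metric.closedBall 0 1) (Metric.closedBall 0 1)) (h0 : f 0 = 0)
    {x : E} (hx : x ∈ Metric.closedBall 0 1) : dyadicExtension f x = f x := by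
  rw [dyadicExtension, h.map_inv_two_pow_smul h0 _ hx, smul_inv_smul₀ (by positivity)]

theorem isometry_dyadicExtension
    (h : IsometryPairOn f g (Metric.closedBall 0 1) (Metric.closedBall 0 1)) (h0 : f 0 = 0) :
    Isometry (dyadicExtension f) := by
  refine Isometry.of_dist_eq fun x y => ?_
  have hx := le_max_left ⌈‖x‖⌉₊ ⌈‖y‖⌉₊
  have hy := le_max_right ⌈‖x‖⌉₊ ⌈‖y‖⌉₊
  rw [h.dyadicExtension_eq h0 hx, h.dyadicExtension_eq h0 hy, dist_smul₀,
    h.dist_eq _ (inv_two_pow_smul_mem_closedBall hx) _ (inv_two_pow_smul_mem_closedBall hy),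
    ← dist_smul₀, smul_inv_smul₀ (by positivity), smul_inv_smul₀ (by positivity)]

theorem dyadicExtension_dyadicExtension
    (h : IsometryPairOn f g (Metric.closedBall 0 1) (Metric.closedBall 0 1)) (h0 : f 0 = 0)
    (y : F) :
    dyadicExtension f (dyadicExtension g y) = y := by
  have g0 : g 0 = 0 := by simpa [h0] using h.invOn.1 (Metric.mem_closedBall_self zero_le_one)
  obtain ⟨j, hj, hj'⟩ := exists_ge_ge ⌈‖y‖⌉₊ ⌈‖dyadicExtension g y‖⌉₊
  rw [h.dyadicExtension_eq h0 hj', h.symm.dyadicExtension_eq g0 hj, inv_smul_smul₀ (by positivity),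
    h.invOn.2 (inv_two_pow_smul_mem_closedBall hj), smul_inv_smul₀ (by positivity)]

theorem exists_linearIsometryEquiv
    (h : IsometryPairOn f g (Metric.closedBall 0 1) (Metric.closedBall 0 1)) (h0 : f 0 = 0) :
    ∃ T : E ≃ₗᵢ[ℝ] F, ∀ x ∈ Metric.closedBall (0 : E) 1, T x = f x := by
  let Φ : E ≃ᵢ F := IsometryEquiv.mk' (dyadicExtension f) (dyadicExtension g)
    (h.dyadicExtension_dyadicExtension h0) (h.isometry_dyadicExtension h0)
  have hΦ : ∀ x ∈ Metric.closedBall (0 : E) 1, Φ x = f x := fun x hx =>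
    h.dyadicExtension_eq_self h0 hx
  refine ⟨Φ.toRealLinearIsometryEquivOfMapZero ?_, hΦ⟩
  rw [hΦ 0 (Metric.mem_closedBall_self zero_le_one), h0]

end UnitBall

end IsometryPairOn

theorem exists_pos_norm_smul_le {X : Type*} [SeminormedAddCommGroup X] [NormedSpace ℝ X] (x : X)
    {r : ℝ} (hr : 0 < r) : ∃ t : ℝ, 0 < t ∧ ‖t • x‖ ≤ r := by
  refine ⟨r / (‖x‖ + 1), by positivity, ?_⟩
  rw [norm_smul, Real.norm_of_nonneg (by positivity), div_mul_eq_mul_div,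
    div_le_iff₀ (by positivity)]
  nlinarith

theorem exists_abs_eq_one_abs_sub_eq (r : ℝ) : ∃ s : ℝ, |s| = 1 ∧ |r - s| = 1 + |r| := by
  rcases le_total 0 r with h | h
  · exact ⟨-1, by simp, by rw [abs_of_nonneg h, abs_of_nonneg (by linarith)]; ring⟩
  · exact ⟨1, by simp, by rw [abs_of_nonpos h, abs_of_nonpos (by linarith)]; ring⟩

theorem exists_abs_eq_one_abs_sub_le_one {r : ℝ} (hr : |r| ≤ 1) :
    ∃ s : ℝ, |s| = 1 ∧ |r - s| ≤ 1 := by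
  have ⟨h₁, h₂⟩ := abs_le.mp hr
  rcases le_total 0 r with h | h
  · exact ⟨1, abs_one, abs_le.mpr ⟨by linarith, by linarith⟩⟩
  · exact ⟨-1, by simp, abs_le.mpr ⟨by linarith, by linarith⟩⟩

theorem eq_of_abs_sub_eq_of_le_max {u w s : ℝ} (hs : |s| = 1) (hwu : |w| ≤ |u|)
    (hu : |u - s| = 1 + |u|) (hw : |u - s| ≤ max 1 |w - s|) : w = u := by
  rw [hu] at hw
  rcases le_max_iff.mp hw with hw | hw
  · have hu0 : |u| = 0 := le_antisymm (by linarith) (abs_nonneg u)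
    rw [abs_eq_zero.mp hu0, abs_eq_zero.mp (le_antisymm (hwu.trans hu0.le) (abs_nonneg w))]
  rcases (abs_eq zero_le_one).mp hs with rfl | rfl <;>
    rcases abs_cases u with ⟨h, -⟩ | ⟨h, -⟩ <;> rw [h] at hwu hu hw <;>
    rcases (abs_eq (by linarith [abs_nonneg w])).mp hu with h | h <;>
    rcases le_abs.mp hw with h' | h' <;> linarith [abs_le.mp hwu]

theorem mul_self_eq_one_of_abs_eq_one {s : ℝ} (hs : |s| = 1) : s * s = 1 := by
  rw [← abs_mul_abs_self, hs, one_mul]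

/-! ### The space `T[θ, S_n]` -/

namespace IsTsirelsonSpace

variable {θ : ℝ} {n : ℕ} {X : Type*} [NormedAddCommGroup X] [NormedSpace ℝ X] {e : ℕ+ → X}
  (hX : IsTsirelsonSpace θ n X e)

section Coordinates

/-- The coordinate functionals of the basis `e`, gathered in one linear map. -/
def coeff : X →ₗ[ℝ] (ℕ+ → ℝ) where
  toFun x := (hX.expansion x).choose
  map_add' x y := by
    refine ((hX.expansion (x + y)).choose_spec.2 _ ?_).symm
    simpa only [Pi.add_apply, add_smul] using
      (hX.expansion x).choose_spec.1.add (hX.expansion y).choose_spec.1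
  map_smul' r x := by
    refine ((hX.expansion (r • x)).choose_spec.2 _ ?_).symm
    simpa only [Pi.smul_apply, smul_eq_mul, mul_smul, RingHom.id_apply] using
      (hX.expansion x).choose_spec.1.const_smul r

theorem hasSum_coeff (x : X) : HasSum (fun i => hX.coeff x i • e i) x :=
  (hX.expansion x).choose_spec.1

theorem coeff_eq_of_hasSum {x : X} {a : ℕ+ → ℝ} (h : HasSum (fun i => a i • e i) x) :
    hX.coeff x = a :=
  ((hX.expansion x).choose_spec.2 a h).symm

theorem coeff_injective : Function.Injective hX.coeff := fun x y h =>
  (hX.hasSum_coeff x).unique (h ▸ hX.hasSum_coeff y)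

theorem coeff_basis (i : ℕ+) : hX.coeff (e i) = Pi.single i 1 := by
  refine hX.coeff_eq_of_hasSum ?_
  convert hasSum_ite_eq i (e i) using 2 with j
  rcases eq_or_ne j i with rfl | h <;> simp [*]

theorem coeff_sum_smul (E : Finset ℕ+) (a : ℕ+ → ℝ) (i : ℕ+) :
    hX.coeff (∑ j ∈ E, a j • e j) i = if i ∈ E then a i else 0 := by
  simp [hX.coeff_basis, Pi.single_apply]

/-- The basis projection onto the coordinates in `E`. -/
def proj (E : Finset ℕ+) : X →ₗ[ℝ] X :=
  ∑ i ∈ E, (LinearMap.proj i ∘ₗ hX.coeff).smulRight (e i)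

theorem proj_apply (E : Finset ℕ+) (x : X) : hX.proj E x = ∑ i ∈ E, hX.coeff x i • e i := by
  simp [proj]

theorem coeff_proj (E : Finset ℕ+) (x : X) (i : ℕ+) :
    hX.coeff (hX.proj E x) i = if i ∈ E then hX.coeff x i else 0 := by
  rw [proj_apply, coeff_sum_smul]

theorem proj_proj (E F : Finset ℕ+) (x : X) : hX.proj E (hX.proj F x) = hX.proj (E ∩ F) x :=
  hX.coeff_injective <| by
    ext i
    simp [coeff_proj, ← ite_and]

theorem proj_eq_self_iff {E : Finset ℕ+} {x : X} :
    hX.proj E x = x ↔ ∀ i ∉ E, hX.coeff x i = 0 := by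
  rw [← hX.coeff_injective.eq_iff, funext_iff]
  refine forall_congr' fun i => ?_
  rw [coeff_proj]
  split_ifs with h <;> simp [h, eq_comm]

theorem proj_eq_zero {E : Finset ℕ+} {x : X} (h : ∀ i ∈ E, hX.coeff x i = 0) : hX.proj E x = 0 := by
  rw [proj_apply]
  exact Finset.sum_eq_zero fun i hi => by rw [h i hi, zero_smul]

theorem tendsto_norm_proj (x : X) :
    Filter.Tendsto (fun F => ‖hX.proj F x‖) Filter.atTop (nhds ‖x‖) := by
  simp only [proj_apply]
  exact (hX.hasSum_coeff x).norm

end Coordinates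

section Norm

/-- The coordinates of `x` in `F`, as an element of `c₀₀`; this is how statements about `tnorm`
reach the space `X`. -/
def truncation (F : Finset ℕ+) (x : X) : ℕ+ →₀ ℝ := Finsupp.indicator F fun i _ => hX.coeff x i

theorem truncation_apply (F : Finset ℕ+) (x : X) (i : ℕ+) :
    hX.truncation F x i = if i ∈ F then hX.coeff x i else 0 := by
  simp [truncation, Finsupp.indicator_apply]

theorem tsProj_truncation (E F : Finset ℕ+) (x : X) :
    tsProj E (hX.truncation F x) = hX.truncation (E ∩ F) x := by
  ext i
  simp [tsProj_apply, truncation_apply, ← ite_and]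

theorem norm_proj (F : Finset ℕ+) (x : X) :
    ‖hX.proj F x‖ = tnorm θ (Schreier n) (hX.truncation F x) := by
  have hsupp : (hX.truncation F x).support ⊆ F := Finsupp.support_indicator_subset F _
  rw [← hX.norm_embed, proj_apply, Finsupp.sum_of_support_subset _ hsupp (fun i c => c • e i)
    fun _ _ => zero_smul ℝ _]
  exact congrArg norm (Finset.sum_congr rfl fun i hi => by rw [truncation_apply, if_pos hi])

theorem norm_basis (hX : IsTsirelsonSpace θ n X e) (hθ1 : θ ≤ 1) (i : ℕ+) : ‖e i‖ = 1 := by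
  have h := hX.norm_embed (Finsupp.single i 1)
  rw [Finsupp.sum_single_index (h := fun i c => c • e i) (zero_smul ℝ _), one_smul] at h
  rw [h]
  refine le_antisymm ((tnorm_le_l1Norm hθ1 _).trans_eq ?_)
    (le_trans ?_ (abs_apply_le_tnorm hθ1 _ i))
  · rw [l1Norm, Finsupp.sum_single_index abs_zero, abs_one]
  · simp

theorem abs_coeff_le_norm (hθ1 : θ ≤ 1) (x : X) (i : ℕ+) : |hX.coeff x i| ≤ ‖x‖ := by
  refine ge_of_tendsto (hX.tendsto_norm_proj x) ?_
  filter_upwards [Filter.eventually_ge_atTop {i}] with F hF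
  rw [norm_proj]
  refine le_trans ?_ (abs_apply_le_tnorm hθ1 _ i)
  rw [truncation_apply, if_pos (hF (Finset.mem_singleton_self i))]

theorem norm_le_norm (hθ0 : 0 ≤ θ) (hθ1 : θ ≤ 1) {x y : X}
    (h : ∀ i, |hX.coeff x i| ≤ |hX.coeff y i|) : ‖x‖ ≤ ‖y‖ := by
  refine le_of_tendsto_of_tendsto' (hX.tendsto_norm_proj x) (hX.tendsto_norm_proj y) fun F => ?_
  rw [norm_proj, norm_proj]
  refine tnorm_le_tnorm hθ0 hθ1 fun i => ?_
  rw [truncation_apply, truncation_apply]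
  split_ifs
  exacts [h i, le_rfl]

theorem norm_eq_norm (hθ0 : 0 ≤ θ) (hθ1 : θ ≤ 1) {x y : X}
    (h : ∀ i, |hX.coeff x i| = |hX.coeff y i|) : ‖x‖ = ‖y‖ :=
  (hX.norm_le_norm hθ0 hθ1 fun i => (h i).le).antisymm
    (hX.norm_le_norm hθ0 hθ1 fun i => (h i).ge)

theorem norm_proj_le_norm (hθ0 : 0 ≤ θ) (hθ1 : θ ≤ 1) (E : Finset ℕ+) (x : X) :
    ‖hX.proj E x‖ ≤ ‖x‖ :=
  hX.norm_le_norm hθ0 hθ1 fun i => by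
    rw [coeff_proj]
    split_ifs <;> simp

theorem mul_sum_norm_proj_le (hθ1 : θ ≤ 1) (x : X) {d : ℕ} {E : Fin d → Finset ℕ+}
    (hE : TsAdmissible (Schreier n) E) : θ * ∑ a, ‖hX.proj (E a) x‖ ≤ ‖x‖ := by
  refine ge_of_tendsto (hX.tendsto_norm_proj x) ?_
  filter_upwards [Filter.eventually_ge_atTop (Finset.univ.biUnion E)] with F hF
  rw [norm_proj]
  refine le_trans (le_of_eq ?_) (mul_sum_tnorm_le hθ1 (hX.truncation F x) hE)
  congr! 2 with a
  have ha : E a ⊆ F := (Finset.subset_biUnion_of_mem E (Finset.mem_univ a)).trans hF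
  rw [tsProj_truncation, norm_proj, Finset.inter_eq_left.mpr ha]

theorem norm_le (hθ0 : 0 ≤ θ) (hθ1 : θ ≤ 1) {x : X} {C : ℝ} (hC : ∀ i, |hX.coeff x i| ≤ C)
    (hadm : ∀ (d : ℕ) (E : Fin d → Finset ℕ+), TsAdmissible (Schreier n) E →
      θ * ∑ a, ‖hX.proj (E a) x‖ ≤ C) : ‖x‖ ≤ C := by
  refine le_of_tendsto' (hX.tendsto_norm_proj x) fun F => ?_
  rw [norm_proj]
  refine tnorm_le hθ0 hθ1 (fun i => ?_) fun d E hE => ?_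
  · rw [truncation_apply]
    split_ifs
    exacts [hC i, abs_zero.trans_le ((abs_nonneg _).trans (hC 1))]
  · refine le_trans (mul_le_mul_of_nonneg_left (Finset.sum_le_sum fun a _ => ?_) hθ0) (hadm d E hE)
    rw [tsProj_truncation, ← norm_proj, Finset.inter_comm, ← proj_proj]
    exact hX.norm_proj_le_norm hθ0 hθ1 F _

theorem norm_attained (hθ0 : 0 ≤ θ) (hθ1 : θ ≤ 1) {x : X} {F : Finset ℕ+} (hx : hX.proj F x = x) :
    (∃ i, |hX.coeff x i| = ‖x‖) ∨ ∃ (d : ℕ) (E : Fin d → Finset ℕ+), TsAdmissible (Schreier n) E ∧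
      θ * ∑ a, ‖hX.proj (E a) x‖ = ‖x‖ := by
  have hnorm : ‖x‖ = tnorm θ (Schreier n) (hX.truncation F x) := by rw [← norm_proj, hx]
  rw [hnorm]
  obtain ⟨i, hi⟩ | ⟨d, E, hE, h⟩ := tnorm_attained hθ0 hθ1 (hX.truncation F x)
  · refine .inl ⟨i, ?_⟩
    rw [← hi, truncation_apply, ← coeff_proj, hx]
  · refine .inr ⟨d, E, hE, ?_⟩
    rw [← h]
    congr! 2 with a
    rw [tsProj_truncation, ← norm_proj, ← proj_proj, hx]

end Norm

section Estimates

theorem norm_proj_le_sum (hθ1 : θ ≤ 1) (E : Finset ℕ+) (x : X) :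
    ‖hX.proj E x‖ ≤ ∑ i ∈ E, |hX.coeff x i| := by
  rw [proj_apply]
  refine (norm_sum_le _ _).trans_eq (Finset.sum_congr rfl fun i _ => ?_)
  rw [norm_smul, hX.norm_basis hθ1, mul_one, Real.norm_eq_abs]

theorem norm_le_of_proj_eq_self (hθ0 : 0 ≤ θ) (hθ1 : θ ≤ 1) {x : X} {A : Finset ℕ+} {C : ℝ}
    (hx : hX.proj A x = x) (hC : ∀ i, |hX.coeff x i| ≤ C)
    (hA : θ * ∑ i ∈ A, |hX.coeff x i| ≤ C) : ‖x‖ ≤ C := by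
  refine hX.norm_le hθ0 hθ1 hC fun d E hE => le_trans ?_ hA
  refine mul_le_mul_of_nonneg_left ?_ hθ0
  calc ∑ a, ‖hX.proj (E a) x‖ = ∑ a, ‖hX.proj (A ∩ E a) x‖ :=
        Finset.sum_congr rfl fun a _ => by rw [Finset.inter_comm, ← proj_proj, hx]
    _ ≤ ∑ a, ∑ i ∈ A, if i ∈ E a then |hX.coeff x i| else 0 :=
        Finset.sum_le_sum fun a _ => by
          rw [Finset.sum_ite_mem]
          exact hX.norm_proj_le_sum hθ1 _ x
    _ ≤ ∑ i ∈ A, |hX.coeff x i| := by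
        rw [Finset.sum_comm]
        exact Finset.sum_le_sum fun i _ => hE.sum_ite_mem_le i (abs_nonneg _)

theorem mul_sum_abs_coeff_le (hθ1 : θ ≤ 1) (x : X) {A : Finset ℕ+} (hA : A ∈ Schreier n) :
    θ * ∑ i ∈ A, |hX.coeff x i| ≤ ‖x‖ := by
  refine le_trans (le_of_eq ?_) (hX.mul_sum_norm_proj_le hθ1 x (TsAdmissible.singletons hA))
  have h : ∀ i, ‖hX.proj {i} x‖ = |hX.coeff x i| := fun i => by
    rw [proj_apply, Finset.sum_singleton, norm_smul, hX.norm_basis hθ1, mul_one, Real.norm_eq_abs]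
  simp only [h]
  rw [← A.sum_coe_sort, ← (A.orderIsoOfFin rfl).toEquiv.sum_comp]
  rfl

theorem norm_smul_basis_add_smul_basis (hX : IsTsirelsonSpace θ n X e) (hθ0 : 0 ≤ θ)
    (hθ : θ ≤ 1 / 2) {i j : ℕ+} (hij : i ≠ j) (α β : ℝ) : ‖α • e i + β • e j‖ = max |α| |β| := by
  have hθ1 : θ ≤ 1 := by linarith
  have hcoeff : hX.coeff (α • e i + β • e j) = (Pi.single i α + Pi.single j β : ℕ+ → ℝ) := by
    simp [hX.coeff_basis, ← Pi.single_smul]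
  generalize α • e i + β • e j = x at hcoeff ⊢
  have hi : hX.coeff x i = α := by simp [hcoeff, hij]
  have hj : hX.coeff x j = β := by simp [hcoeff, hij.symm]
  have hsupp : ∀ l ∉ ({i, j} : Finset ℕ+), hX.coeff x l = 0 := fun l hl => by
    simp only [Finset.mem_insert, Finset.mem_singleton, not_or] at hl
    simp [hcoeff, hl.1, hl.2]
  refine le_antisymm (hX.norm_le_of_proj_eq_self hθ0 hθ1 (hX.proj_eq_self_iff.mpr hsupp)
    (fun l => ?_) ?_) (max_le (hi ▸ hX.abs_coeff_le_norm hθ1 x i)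
      (hj ▸ hX.abs_coeff_le_norm hθ1 x j))
  · by_cases hli : l = i
    · rw [hli, hi]
      exact le_max_left _ _
    by_cases hlj : l = j
    · rw [hlj, hj]
      exact le_max_right _ _
    · rw [hsupp l (by simp [hli, hlj]), abs_zero]
      positivity
  · rw [Finset.sum_pair hij, hi, hj]
    nlinarith [le_max_left |α| |β|, le_max_right |α| |β|, abs_nonneg α, abs_nonneg β]

end Estimates

section Erase

/-- The basis projection that deletes the `i`-th coordinate. -/
def erase (i : ℕ+) : X →ₗ[ℝ] X :=
  LinearMap.id - (LinearMap.proj i ∘ₗ hX.coeff).smulRight (e i)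

theorem erase_apply (i : ℕ+) (x : X) : hX.erase i x = x - hX.coeff x i • e i := rfl

theorem smul_basis_add_erase (i : ℕ+) (x : X) : hX.coeff x i • e i + hX.erase i x = x :=
  add_sub_cancel _ _

theorem coeff_erase (i : ℕ+) (x : X) (j : ℕ+) :
    hX.coeff (hX.erase i x) j = if j = i then 0 else hX.coeff x j := by
  rw [erase_apply]
  split_ifs with h <;> simp [hX.coeff_basis, h]

theorem norm_erase_le (hθ0 : 0 ≤ θ) (hθ1 : θ ≤ 1) (i : ℕ+) (x : X) : ‖hX.erase i x‖ ≤ ‖x‖ :=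
  hX.norm_le_norm hθ0 hθ1 fun j => by
    rw [coeff_erase]
    split_ifs <;> simp

theorem norm_smul_basis_add_le (hθ0 : 0 ≤ θ) (hθ1 : θ ≤ 1) {i : ℕ+} {y : X}
    (hy : hX.coeff y i = 0) (α : ℝ) : ‖α • e i + y‖ ≤ max |α| (θ * |α| + ‖y‖) := by
  refine hX.norm_le hθ0 hθ1 (fun j => ?_) fun d E hE => le_max_of_le_right ?_
  · by_cases hj : j = i
    · simp [hj, hy, hX.coeff_basis]
    · refine le_max_of_le_right (le_trans ?_ ((hX.abs_coeff_le_norm hθ1 y j).trans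
        (le_add_of_nonneg_left (by positivity))))
      simp [hj, hX.coeff_basis]
  · have hbasis : ∀ a, ‖hX.proj (E a) (α • e i)‖ = if i ∈ E a then |α| else 0 := fun a => by
      simp [proj_apply, hX.coeff_basis, Pi.single_apply, norm_smul, hX.norm_basis hθ1,
        apply_ite norm]
    calc θ * ∑ a, ‖hX.proj (E a) (α • e i + y)‖
        ≤ θ * ∑ a, ((if i ∈ E a then |α| else 0) + ‖hX.proj (E a) y‖) := by
          gcongr with a
          rw [map_add, ← hbasis]
          exact norm_add_le _ _
      _ ≤ θ * |α| + ‖y‖ := by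
          rw [Finset.sum_add_distrib, mul_add]
          gcongr
          exacts [hE.sum_ite_mem_le i (abs_nonneg α), hX.mul_sum_norm_proj_le hθ1 y hE]

theorem norm_smul_basis_one_add (hθ0 : 0 ≤ θ) (hθ1 : θ < 1) {y : X} (hy : hX.coeff y 1 = 0)
    (α : ℝ) : ‖α • e 1 + y‖ = max |α| ‖y‖ := by
  have hcoeff : ∀ j, hX.coeff (α • e 1 + y) j = if j = 1 then α else hX.coeff y j := fun j => by
    split_ifs with h <;> simp [hX.coeff_basis, h, hy]
  generalize α • e 1 + y = z at hcoeff ⊢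
  refine le_antisymm ?_ (max_le ?_ (hX.norm_le_norm hθ0 hθ1.le fun j => ?_))
  · have hz : ‖z‖ ≤ max (max |α| ‖y‖) (θ * ‖z‖) := by
      refine hX.norm_le hθ0 hθ1.le (fun j => le_max_of_le_left ?_) fun d E hE => ?_
      · rw [hcoeff]
        split_ifs
        exacts [le_max_left _ _, le_max_of_le_right (hX.abs_coeff_le_norm hθ1.le y j)]
      by_cases h : ∃ a, 1 ∈ E a
      · obtain ⟨a, ha⟩ := h
        rw [Fintype.sum_eq_single a fun b hb => absurd (hE.eq_of_one_mem ha b) hb]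
        exact le_max_of_le_right
          (mul_le_mul_of_nonneg_left (hX.norm_proj_le_norm hθ0 hθ1.le _ z) hθ0)
      · refine le_max_of_le_left (le_max_of_le_right ?_)
        have hproj : ∀ a, hX.proj (E a) z = hX.proj (E a) y := fun a => by
          simp only [proj_apply]
          refine Finset.sum_congr rfl fun i hi => ?_
          have hi1 : i ≠ 1 := by
            rintro rfl
            exact h ⟨a, hi⟩
          rw [hcoeff, if_neg hi1]
        simpa only [hproj] using hX.mul_sum_norm_proj_le hθ1.le y hE
    rcases le_max_iff.mp hz with h | h
    · exact h
    · exact (nonpos_of_mul_nonpos_right (by linarith : (1 - θ) * ‖z‖ ≤ 0) (by linarith)).trans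
        (le_max_of_le_left (abs_nonneg α))
  · simpa [hcoeff] using hX.abs_coeff_le_norm hθ1.le z 1
  · rw [hcoeff]
    split_ifs with h
    exacts [by simp [h, hy], le_rfl]

end Erase

section LinearIsometry

theorem norm_basis_add (hθ0 : 0 ≤ θ) (hθ : θ ≤ 1 / 2) (i : ℕ+) {u : X} (hu : ‖u‖ ≤ 1 / 4) :
    ‖e i + u‖ = 1 + hX.coeff u i := by
  have hθ1 : θ ≤ 1 := by linarith
  have hui := abs_le.mp ((hX.abs_coeff_le_norm hθ1 u i).trans hu)
  have hsplit : e i + u = (1 + hX.coeff u i) • e i + hX.erase i u := by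
    rw [erase_apply]
    module
  refine le_antisymm ?_ ?_
  · have herase := (hX.norm_erase_le hθ0 hθ1 i u).trans hu
    rw [hsplit]
    refine (hX.norm_smul_basis_add_le hθ0 hθ1 (by simp [coeff_erase]) _).trans ?_
    rw [abs_of_nonneg (by linarith)]
    exact max_le le_rfl (by nlinarith)
  · refine le_trans (le_of_eq ?_)
      ((le_abs_self _).trans (hX.abs_coeff_le_norm hθ1 (e i + u) i))
    simp [hX.coeff_basis]

-- `v` is the midpoint of `T (e i + u)` and of a vector near `T (e i)` at which `φ ≤ ‖·‖` is known;
-- convexity turns this upper bound into a lower bound for `φ (T (e i + u))`.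
theorem apply_map_basis_add_eq (hθ0 : 0 ≤ θ) (hθ : θ ≤ 1 / 2) (T : X ≃ₗᵢ[ℝ] X) {φ : X → ℝ}
    (hφ : ConvexOn ℝ Set.univ φ) (hle : ∀ x, φ x ≤ ‖x‖) {i : ℕ+} {v : X}
    (hv : ‖v - T (e i)‖ ≤ 1 / 16) (hφv : φ v = ‖v‖) {u : X} (hu : ‖u‖ ≤ 1 / 8) :
    φ (T (e i + u)) = 1 + hX.coeff u i := by
  obtain ⟨d, rfl⟩ : ∃ d, v = T (e i + d) := ⟨T.symm v - e i, by simp⟩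
  replace hv : ‖d‖ ≤ 1 / 16 := by simpa using hv
  have hnorm : ∀ u : X, ‖u‖ ≤ 1 / 4 → ‖T (e i + u)‖ = 1 + hX.coeff u i := fun u hu => by
    rw [T.norm_map, hX.norm_basis_add hθ0 hθ i hu]
  refine le_antisymm ((hle _).trans_eq (hnorm u (by linarith))) ?_
  have hreflect : ‖(2 : ℝ) • d - u‖ ≤ 1 / 4 := by
    refine (norm_sub_le _ _).trans ?_
    rw [norm_smul, Real.norm_ofNat]
    linarith
  have hmid : T (e i + d) =
      (1 / 2 : ℝ) • T (e i + u) + (1 / 2 : ℝ) • T (e i + ((2 : ℝ) • d - u)) := by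
    rw [← map_smul, ← map_smul, ← map_add]
    congr 1
    module
  have hconv := hφ.2 (Set.mem_univ (T (e i + u))) (Set.mem_univ (T (e i + ((2 : ℝ) • d - u))))
    (by norm_num : (0 : ℝ) ≤ 1 / 2) (by norm_num : (0 : ℝ) ≤ 1 / 2) (by norm_num)
  have hupper := (hle _).trans_eq (hnorm _ hreflect)
  rw [← hmid, hφv, hnorm d (by linarith)] at hconv
  simp only [map_sub, map_smul, Pi.sub_apply, Pi.smul_apply, smul_eq_mul] at hconv hupper
  linarith

theorem convexOn_abs_coeff (j : ℕ+) : ConvexOn ℝ Set.univ fun x => |hX.coeff x j| :=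
  (convexOn_univ_norm (E := ℝ)).comp_linearMap
    (LinearMap.proj (R := ℝ) (φ := fun _ : ℕ+ => ℝ) j ∘ₗ hX.coeff)

theorem convexOn_norm_proj (E : Finset ℕ+) : ConvexOn ℝ Set.univ fun x => ‖hX.proj E x‖ :=
  convexOn_univ_norm.comp_linearMap (hX.proj E)

theorem convexOn_mul_sum_norm_proj (hθ0 : 0 ≤ θ) {d : ℕ} (E : Fin d → Finset ℕ+) :
    ConvexOn ℝ Set.univ fun x => θ * ∑ a, ‖hX.proj (E a) x‖ := by
  have hsum : ConvexOn ℝ Set.univ (∑ a, fun x => ‖hX.proj (E a) x‖) :=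
    Finset.sum_induction _ (ConvexOn ℝ Set.univ) (fun _ _ => ConvexOn.add)
      (convexOn_const 0 convex_univ) fun a _ => hX.convexOn_norm_proj (E a)
  simpa only [Finset.sum_apply, smul_eq_mul] using hsum.smul hθ0

/-- The admissible family `E` norms every vector near `T (e i)`; the radius `1 / 8` is the one
provided by `apply_map_basis_add_eq`. -/
structure IsNormingNear (T : X ≃ₗᵢ[ℝ] X) (i : ℕ+) {d : ℕ} (E : Fin d → Finset ℕ+) : Prop where
  admissible : TsAdmissible (Schreier n) E
  mul_sum_eq : ∀ u, ‖u‖ ≤ 1 / 8 →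
    θ * ∑ a, ‖hX.proj (E a) (T (e i + u))‖ = 1 + hX.coeff u i

theorem exists_coeff_eq_or_isNormingNear (hθ0 : 0 ≤ θ) (hθ : θ ≤ 1 / 2) (T : X ≃ₗᵢ[ℝ] X) (i : ℕ+) :
    (∃ (j : ℕ+) (η : ℝ), |η| = 1 ∧ ∀ u, hX.coeff u i = η * hX.coeff (T u) j) ∨
      ∃ (d : ℕ) (E : Fin d → Finset ℕ+), hX.IsNormingNear T i E := by
  have hθ1 : θ ≤ 1 := by linarith
  obtain ⟨F, hF⟩ : ∃ F, ‖hX.proj F (T (e i)) - T (e i)‖ ≤ 1 / 16 := by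
    have h := (hX.hasSum_coeff (T (e i))).eventually (Metric.closedBall_mem_nhds _ (ε := 1 / 16)
      (by norm_num))
    simpa only [proj_apply, Metric.mem_closedBall, dist_eq_norm] using h.exists
  have hself : hX.proj F (hX.proj F (T (e i))) = hX.proj F (T (e i)) := by
    rw [proj_proj, Finset.inter_self]
  obtain ⟨j, hj⟩ | ⟨d, E, hE, h⟩ := hX.norm_attained hθ0 hθ1 hself
  · have hT : ∀ u, ‖u‖ ≤ 1 / 8 → |hX.coeff (T (e i + u)) j| = 1 + hX.coeff u i := fun u =>
      hX.apply_map_basis_add_eq hθ0 hθ T (hX.convexOn_abs_coeff j)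
        (fun x => hX.abs_coeff_le_norm hθ1 x j) hF hj
    have hη : |hX.coeff (T (e i)) j| = 1 := by simpa using hT 0 (by simp)
    refine .inl ⟨j, hX.coeff (T (e i)) j, hη, fun u => ?_⟩
    obtain ⟨r, hr, hru⟩ := exists_pos_norm_smul_le u (by norm_num : (0 : ℝ) < 1 / 8)
    have hu := hT (r • u) hru
    have hsmall := abs_le.mp ((hX.abs_coeff_le_norm hθ1 (T (r • u)) j).trans
      ((T.norm_map _).trans_le hru))
    simp only [map_add, map_smul, Pi.add_apply, Pi.smul_apply, smul_eq_mul] at hu hsmall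
    refine mul_left_cancel₀ hr.ne' ?_
    rcases (abs_eq zero_le_one).mp hη with h | h <;> rw [h] at hu ⊢
    · rw [abs_of_nonneg (by linarith)] at hu
      linarith
    · rw [abs_of_nonpos (by linarith)] at hu
      linarith
  · exact .inr ⟨d, E, hE, fun u => hX.apply_map_basis_add_eq hθ0 hθ T
      (hX.convexOn_mul_sum_norm_proj hθ0 E) (fun x => hX.mul_sum_norm_proj_le hθ1 x hE) hF h⟩

theorem exists_finset_coeff_eq_zero (hθ0 : 0 ≤ θ) (hθ : θ ≤ 1 / 2) (T : X ≃ₗᵢ[ℝ] X) (i : ℕ+) :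
    ∃ N : Finset ℕ+, ∀ u, (∀ l ∈ N, hX.coeff (T u) l = 0) → hX.coeff u i = 0 := by
  obtain ⟨j, η, -, h⟩ | ⟨d, E, hE⟩ := hX.exists_coeff_eq_or_isNormingNear hθ0 hθ T i
  · exact ⟨{j}, fun u hu => by rw [h, hu j (Finset.mem_singleton_self j), mul_zero]⟩
  · refine ⟨Finset.univ.biUnion E, fun u hu => ?_⟩
    obtain ⟨r, hr, hru⟩ := exists_pos_norm_smul_le u (by norm_num : (0 : ℝ) < 1 / 8)
    have hproj : ∀ a, hX.proj (E a) (T u) = 0 := fun a =>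
      hX.proj_eq_zero fun l hl => hu l (Finset.mem_biUnion.mpr ⟨a, Finset.mem_univ a, hl⟩)
    have hsame := (hE.mul_sum_eq (r • u) hru).symm.trans
      ((by simp [hproj]) : _ = θ * ∑ a, ‖hX.proj (E a) (T (e i + 0))‖)
    rw [hE.mul_sum_eq 0 (by simp)] at hsame
    simpa [hr.ne'] using hsame

theorem exists_basis_map_coeff_eq_zero (hθ0 : 0 ≤ θ) (hθ : θ ≤ 1 / 2) (T : X ≃ₗᵢ[ℝ] X)
    (S : Finset ℕ+) (i : ℕ+) : ∃ m ≠ i, ∀ l ∈ S, hX.coeff (T (e m)) l = 0 := by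
  choose N hN using hX.exists_finset_coeff_eq_zero hθ0 hθ T.symm
  obtain ⟨m, hm⟩ := Infinite.exists_notMem_finset (insert i (S.biUnion N))
  simp only [Finset.mem_insert, Finset.mem_biUnion, not_or, not_exists, not_and] at hm
  refine ⟨m, hm.1, fun l hl => hN l _ fun l' hl' => ?_⟩
  have hlm : l' ≠ m := fun h => hm.2 l hl (h ▸ hl')
  simp [hX.coeff_basis, hlm]

theorem IsNormingNear.norm_proj_zero_ne_one {hX : IsTsirelsonSpace θ n X e} (hθ0 : 0 ≤ θ)
    (hθ : θ ≤ 1 / 2) {T : X ≃ₗᵢ[ℝ] X} {i : ℕ+} {d : ℕ} {E : Fin (d + 1) → Finset ℕ+}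
    (hE : hX.IsNormingNear T i E) : ‖hX.proj (E 0) (T (e i))‖ ≠ 1 := by
  have hθ1 : θ ≤ 1 := by linarith
  set w := T (e i) with hw
  intro hw1
  obtain ⟨u, hu⟩ : ∃ u, T u = (1 / 8 : ℝ) • hX.proj (E 0) w := T.surjective _
  have hu8 : ‖u‖ ≤ 1 / 8 := by
    rw [← T.norm_map, hu, norm_smul, hw1]
    norm_num
  have hproj0 : ‖hX.proj (E 0) (w + T u)‖ = 9 / 8 := by
    have hsmul : hX.proj (E 0) (w + T u) = (9 / 8 : ℝ) • hX.proj (E 0) w := by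
      rw [hu, map_add, map_smul, proj_proj, Finset.inter_self]
      module
    rw [hsmul, norm_smul, hw1]
    norm_num
  have hprojs : ∀ a : Fin d, hX.proj (E a.succ) (w + T u) = hX.proj (E a.succ) w := fun a => by
    have hdisj : hX.proj (E a.succ) (hX.proj (E 0) w) = 0 := hX.proj_eq_zero fun l hl => by
      rw [coeff_proj, if_neg fun hl0 => Fin.succ_ne_zero a (hE.admissible.eq_of_mem hl hl0)]
    rw [hu, map_add, map_smul, hdisj, smul_zero, add_zero]
  have hcoeff := hX.apply_map_basis_add_eq hθ0 hθ T (i := i) (hX.convexOn_norm_proj (E 0))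
    (hX.norm_proj_le_norm hθ0 hθ1 (E 0)) (v := w) (by simp [hw])
    (by rw [hw1, hw, T.norm_map, hX.norm_basis hθ1]) hu8
  have h0 := hE.mul_sum_eq 0 (by simp)
  have h1 := hE.mul_sum_eq u hu8
  rw [map_add, ← hw, hproj0] at hcoeff
  rw [add_zero, ← hw, Fin.sum_univ_succ, hw1, map_zero, Pi.zero_apply] at h0
  rw [map_add, ← hw, Fin.sum_univ_succ, hproj0] at h1
  simp only [hprojs] at h1
  linarith

-- Dropping `E 0` and appending a set `G` beyond all the `E a` keeps the family admissible, so
-- `proj G z` has to fit in the room left by `proj (E 0) w`.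
theorem norm_le_norm_proj_zero (hθ0 : 0 < θ) (hθ1 : θ ≤ 1) {d : ℕ} {E : Fin (d + 1) → Finset ℕ+}
    (hE : TsAdmissible (Schreier n) E) {M : ℕ+} (hM : ∀ a, ∀ l ∈ E a, l ≤ M) {w z : X}
    (hz : ∀ l ≤ M, hX.coeff z l = 0) (hadd : ‖w + z‖ ≤ θ * ∑ a, ‖hX.proj (E a) w‖)
    (hsub : ‖w - z‖ ≤ θ * ∑ a, ‖hX.proj (E a) w‖) : ‖z‖ ≤ ‖hX.proj (E 0) w‖ := by
  refine le_of_tendsto' (hX.tendsto_norm_proj z) fun F => ?_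
  set G := F.filter (M < ·) with hG
  have hFG : hX.proj F z = hX.proj G z := by
    rw [proj_apply, proj_apply, hG, Finset.sum_filter_of_ne]
    exact fun l _ hl => not_le.mp fun hlM => hl (by rw [hz l hlM, zero_smul])
  rw [hFG]
  rcases G.eq_empty_or_nonempty with hG0 | hGne
  · rw [hG0, proj_apply, Finset.sum_empty, norm_zero]
    exact norm_nonneg _
  have hadm := hE.snoc_tail hGne fun a l hl g hg =>
    (hM a l hl).trans_lt (Finset.mem_filter.mp hg).2
  have hEz : ∀ a, hX.proj (E a) z = 0 := fun a =>
    hX.proj_eq_zero fun l hl => hz l (hM a l hl)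
  have hadd' := (hX.mul_sum_norm_proj_le hθ1 (w + z) hadm).trans hadd
  have hsub' := (hX.mul_sum_norm_proj_le hθ1 (w - z) hadm).trans hsub
  rw [Fin.sum_univ_succ (fun a => ‖hX.proj (E a) w‖), Fin.sum_univ_castSucc] at hadd' hsub'
  simp only [Fin.snoc_castSucc, Fin.snoc_last, Fin.tail, map_add, map_sub, hEz, add_zero,
    sub_zero] at hadd' hsub'
  have hadd'' := le_of_mul_le_mul_left hadd' hθ0
  have hsub'' := le_of_mul_le_mul_left hsub' hθ0
  have htwo := norm_sub_le (hX.proj G w + hX.proj G z) (hX.proj G w - hX.proj G z)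
  rw [add_sub_sub_cancel, ← two_smul ℝ, norm_smul, Real.norm_ofNat] at htwo
  linarith

theorem exists_coeff_eq_mul_coeff_map (hθ0 : 0 < θ) (hθ : θ ≤ 1 / 2) (T : X ≃ₗᵢ[ℝ] X) (i : ℕ+) :
    ∃ (j : ℕ+) (η : ℝ), |η| = 1 ∧ ∀ u, hX.coeff u i = η * hX.coeff (T u) j := by
  have hθ1 : θ ≤ 1 := by linarith
  refine (hX.exists_coeff_eq_or_isNormingNear hθ0.le hθ T i).resolve_right ?_
  rintro ⟨d, E, hE⟩
  have hw1 : θ * ∑ a, ‖hX.proj (E a) (T (e i))‖ = 1 := by simpa using hE.mul_sum_eq 0 (by simp)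
  obtain _ | d := d
  · simp at hw1
  obtain ⟨M, hM⟩ := (Finset.univ.biUnion E).bddAbove
  obtain ⟨m, hmi, hm⟩ := hX.exists_basis_map_coeff_eq_zero hθ0.le hθ T (Finset.Iic M) i
  have hpair : ∀ β : ℝ, |β| ≤ 1 → ‖T (e i) + β • T (e m)‖ ≤ 1 := fun β hβ => by
    have h := hX.norm_smul_basis_add_smul_basis hθ0.le hθ hmi.symm 1 β
    rw [one_smul, abs_one, max_eq_left hβ] at h
    rw [← map_smul, ← map_add, T.norm_map, h]
  have hle : ‖T (e m)‖ ≤ ‖hX.proj (E 0) (T (e i))‖ := by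
    refine hX.norm_le_norm_proj_zero hθ0 hθ1 hE.admissible (M := M)
      (fun a l hl => hM (Finset.mem_biUnion.mpr ⟨a, Finset.mem_univ a, hl⟩))
      (fun l hl => hm l (Finset.mem_Iic.mpr hl)) ?_ ?_ <;> rw [hw1]
    · simpa using hpair 1 (by simp)
    · simpa [sub_eq_add_neg] using hpair (-1) (by simp)
  refine hE.norm_proj_zero_ne_one hθ0.le hθ (le_antisymm ?_ ?_)
  · exact (hX.norm_proj_le_norm hθ0.le hθ1 _ _).trans_eq (by rw [T.norm_map, hX.norm_basis hθ1])
  · rwa [T.norm_map, hX.norm_basis hθ1] at hle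

end LinearIsometry

section Indicator

theorem coeff_sum_basis (A : Finset ℕ+) (i : ℕ+) :
    hX.coeff (∑ a ∈ A, e a) i = if i ∈ A then 1 else 0 := by
  simp [hX.coeff_basis, Pi.single_apply]

theorem proj_sum_basis (E A : Finset ℕ+) : hX.proj E (∑ a ∈ A, e a) = ∑ a ∈ E ∩ A, e a :=
  hX.coeff_injective <| by
    ext i
    simp [coeff_proj, coeff_sum_basis, -map_sum, ← ite_and]

theorem norm_sum_basis_le (hX : IsTsirelsonSpace θ n X e) (hθ1 : θ ≤ 1) (A : Finset ℕ+) :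
    ‖∑ a ∈ A, e a‖ ≤ #A :=
  (norm_sum_le _ _).trans_eq (by simp [hX.norm_basis hθ1])

theorem norm_sum_basis_lt (hX : IsTsirelsonSpace θ n X e) (hθ0 : 0 ≤ θ) (hθ : θ ≤ 1 / 2)
    {A : Finset ℕ+} (hA : 1 < #A) : ‖∑ a ∈ A, e a‖ < #A := by
  obtain ⟨p, hp, q, hq, hpq⟩ := Finset.one_lt_card.mp hA
  have hq' : q ∈ A.erase p := Finset.mem_erase.mpr ⟨hpq.symm, hq⟩
  have hpair := hX.norm_smul_basis_add_smul_basis hθ0 hθ hpq 1 1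
  rw [one_smul, one_smul, abs_one, max_self] at hpair
  have hcard : (#((A.erase p).erase q) : ℝ) + 2 = #A := by
    rw [← Finset.card_erase_add_one hp, ← Finset.card_erase_add_one hq']
    push_cast
    ring
  have hrest := hX.norm_sum_basis_le (by linarith) ((A.erase p).erase q)
  rw [← Finset.add_sum_erase _ _ hp, ← Finset.add_sum_erase _ _ hq', ← add_assoc]
  linarith [norm_add_le (e p + e q) (∑ a ∈ (A.erase p).erase q, e a)]

-- If a family `E` norms `∑ a ∈ A, e a`, then the norms of its pieces add up to `#A`; this forces
-- `E` to cover `A` and to meet it in single points.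
theorem mem_schreier_of_mul_card_le_norm (hX : IsTsirelsonSpace θ n X e) (hθ0 : 0 < θ)
    (hθ : θ ≤ 1 / 2) {A : Finset ℕ+} (hA : 1 < θ * #A) (h : θ * #A ≤ ‖∑ a ∈ A, e a‖) :
    A ∈ Schreier n := by
  have hθ1 : θ ≤ 1 := by linarith
  have hself : hX.proj A (∑ a ∈ A, e a) = ∑ a ∈ A, e a := by
    rw [proj_sum_basis, Finset.inter_self]
  obtain ⟨i, hi⟩ | ⟨d, E, hE, hnorm⟩ := hX.norm_attained hθ0.le hθ1 hself
  · rw [← hi, coeff_sum_basis] at h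
    split_ifs at h <;> norm_num at h <;> linarith
  simp only [proj_sum_basis] at hnorm
  rw [← hnorm, mul_le_mul_iff_right₀ hθ0] at h
  have hpiece : ∀ a, ‖∑ i ∈ E a ∩ A, e i‖ ≤ #(E a ∩ A) := fun a => hX.norm_sum_basis_le hθ1 _
  have hsum : ∑ a, #(E a ∩ A) = #(Finset.univ.biUnion E ∩ A) := by
    rw [Finset.biUnion_inter, Finset.card_biUnion]
    exact fun a _ b _ hab => Finset.disjoint_left.mpr fun i hi hi' =>
      hab (hE.eq_of_mem (Finset.mem_inter.mp hi).1 (Finset.mem_inter.mp hi').1)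
  have hle : #(Finset.univ.biUnion E ∩ A) ≤ #A := Finset.card_le_card Finset.inter_subset_right
  have hsum_le : ∑ a, (#(E a ∩ A) : ℝ) ≤ #A := by exact_mod_cast hsum.trans_le hle
  have hge : #A ≤ #(Finset.univ.biUnion E ∩ A) := by
    rw [← hsum]
    exact_mod_cast h.trans (Finset.sum_le_sum fun a _ => hpiece a)
  refine hE.mem_of_card_inter_le_one (Finset.inter_eq_right.mp
    (Finset.eq_of_subset_of_card_le Finset.inter_subset_right hge)) fun a => ?_
  by_contra! ha
  have hlt := Finset.sum_lt_sum (fun a _ => hpiece a)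
    ⟨a, Finset.mem_univ a, hX.norm_sum_basis_lt hθ0.le hθ ha⟩
  linarith

theorem coeff_linearIsometryEquiv (hθ0 : 0 < θ) (hθ : θ ≤ 1 / 2) (hn : 2 ≤ n) (T : X ≃ₗᵢ[ℝ] X) :
    ∃ η : ℕ+ → ℝ, (∀ i, |η i| = 1) ∧ ∀ x i, hX.coeff (T x) i = η i * hX.coeff x i := by
  choose σ η hη hσ using hX.exists_coeff_eq_mul_coeff_map hθ0 hθ T.symm
  choose τ ζ _ hτ using hX.exists_coeff_eq_mul_coeff_map hθ0 hθ T
  replace hσ : ∀ x i, hX.coeff (T x) i = η i * hX.coeff x (σ i) := fun x i => by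
    simpa using hσ i (T x)
  have hστ : ∀ i, σ (τ i) = i := fun i => by
    by_contra h
    simpa [hσ, hX.coeff_basis, h] using hτ i (e i)
  have hτσ : ∀ i, τ (σ i) = i := fun i => by
    by_contra h
    simpa [hX.coeff_basis, hτ (σ i), h] using hσ (T.symm (e i)) i
  set π : Equiv.Perm ℕ+ := ⟨σ, τ, hτσ, hστ⟩
  have hθ1 : θ ≤ 1 := by linarith
  have hfix : ∀ i, σ i = i := by
    refine Schreier.perm_apply_eq_self (σ := π) (k := ⌈θ⁻¹⌉₊) hn fun A hA hk => ?_
    have hcard : #(A.image π) = #A := Finset.card_image_of_injective _ π.injective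
    refine hX.mem_schreier_of_mul_card_le_norm hθ0 hθ ?_ ?_ <;> rw [hcard]
    · rw [← inv_lt_iff_one_lt_mul₀' hθ0]
      exact Nat.lt_of_ceil_lt hk
    · have hmem : ∀ i, σ i ∈ A.image π ↔ i ∈ A := fun i => π.injective.mem_finset_image
      have hnorm : ‖∑ a ∈ A, e a‖ = ‖∑ a ∈ A.image π, e a‖ := by
        rw [← T.norm_map (∑ a ∈ A.image π, e a)]
        exact hX.norm_eq_norm hθ0.le hθ1 fun i => by
          rw [hσ, abs_mul, hη, one_mul, coeff_sum_basis, coeff_sum_basis, if_congr (hmem i) rfl rfl]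
      rw [← hnorm]
      have hone : ∀ i ∈ A, |hX.coeff (∑ a ∈ A, e a) i| = 1 := fun i hi => by
        rw [coeff_sum_basis, if_pos hi, abs_one]
      simpa [Finset.sum_congr rfl hone, -map_sum] using
        hX.mul_sum_abs_coeff_le hθ1 (∑ a ∈ A, e a) hA
  exact ⟨η, hη, fun x i => by rw [hσ, hfix]⟩

end Indicator

end IsTsirelsonSpace

/-! ### Isometries of the unit sphere -/

/-- `U` and `V` restrict to mutually inverse isometries of the unit sphere, and `U` multiplies the
poles `±e 1` by the sign `δ`. -/
structure IsPolarIsometryPair {X : Type*} [NormedAddCommGroup X] [NormedSpace ℝ X] (e : ℕ+ → X)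
    (U V : X → X) (δ : ℝ) : Prop
    extends IsometryPairOn U V (Metric.sphere 0 1) (Metric.sphere 0 1) where
  abs_eq_one : |δ| = 1
  map_pole : ∀ s : ℝ, |s| = 1 → U (s • e 1) = (δ * s) • e 1

namespace IsPolarIsometryPair

variable {X : Type*} [NormedAddCommGroup X] [NormedSpace ℝ X] {e : ℕ+ → X} {U V : X → X}
  {δ s : ℝ}

theorem abs_mul_eq_one (h : IsPolarIsometryPair e U V δ) (hs : |s| = 1) : |δ * s| = 1 := by
  rw [abs_mul, h.abs_eq_one, hs, one_mul]

theorem mul_mul_cancel (h : IsPolarIsometryPair e U V δ) (s : ℝ) : δ * (δ * s) = s := by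
  rw [← mul_assoc, mul_self_eq_one_of_abs_eq_one h.abs_eq_one, one_mul]

end IsPolarIsometryPair

namespace IsTsirelsonSpace

variable {θ : ℝ} {n : ℕ} {X : Type*} [NormedAddCommGroup X] [NormedSpace ℝ X] {e : ℕ+ → X}
  (hX : IsTsirelsonSpace θ n X e)

section Update

/-- The vector obtained from `x` by replacing its `i`-th coordinate by `s`. -/
def update (i : ℕ+) (s : ℝ) (x : X) : X := s • e i + hX.erase i x

theorem coeff_update (i : ℕ+) (s : ℝ) (x : X) :
    hX.coeff (hX.update i s x) = Function.update (hX.coeff x) i s := by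
  ext j
  rcases eq_or_ne j i with rfl | h <;> simp [update, hX.coeff_basis, coeff_erase, *]

theorem update_update (i : ℕ+) (s t : ℝ) (x : X) :
    hX.update i t (hX.update i s x) = hX.update i t x :=
  hX.coeff_injective <| by simp only [coeff_update, Function.update_idem]

theorem update_eq_self {i : ℕ+} {s : ℝ} {x : X} (h : hX.coeff x i = s) : hX.update i s x = x :=
  h ▸ hX.smul_basis_add_erase i x

theorem erase_eq_self {i : ℕ+} {x : X} (h : hX.coeff x i = 0) : hX.erase i x = x := by
  rw [erase_apply, h, zero_smul, sub_zero]

theorem update_sub_update (i : ℕ+) (s t : ℝ) (x y : X) :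
    hX.update i s x - hX.update i t y = (s - t) • e i + hX.erase i (x - y) := by
  rw [update, update, map_sub]
  module

theorem norm_sub_smul_basis_one (hθ0 : 0 ≤ θ) (hθ1 : θ < 1) (x : X) (s : ℝ) :
    ‖x - s • e 1‖ = max |hX.coeff x 1 - s| ‖hX.erase 1 x‖ := by
  rw [← hX.norm_smul_basis_one_add hθ0 hθ1 (by simp [coeff_erase])]
  nth_rw 1 [← hX.smul_basis_add_erase 1 x]
  congr 1
  module

theorem norm_eq_max (hθ0 : 0 ≤ θ) (hθ1 : θ < 1) (x : X) :
    ‖x‖ = max |hX.coeff x 1| ‖hX.erase 1 x‖ := by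
  simpa using hX.norm_sub_smul_basis_one hθ0 hθ1 x 0

theorem norm_update_one (hθ0 : 0 ≤ θ) (hθ1 : θ < 1) (s : ℝ) (x : X) :
    ‖hX.update 1 s x‖ = max |s| ‖hX.erase 1 x‖ :=
  hX.norm_smul_basis_one_add hθ0 hθ1 (by simp [coeff_erase]) s

theorem coeff_one_eq_neg_iff (hθ0 : 0 ≤ θ) (hθ1 : θ < 1) {x : X} (hx : ‖x‖ ≤ 1) {s : ℝ}
    (hs : |s| = 1) : hX.coeff x 1 = -s ↔ ‖x - s • e 1‖ = 2 := by
  rw [hX.norm_sub_smul_basis_one hθ0 hθ1]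
  have herase := (hX.norm_erase_le hθ0 hθ1.le 1 x).trans hx
  have hcoeff := abs_le.mp ((hX.abs_coeff_le_norm hθ1.le x 1).trans hx)
  refine ⟨fun h => ?_, fun h => ?_⟩
  · have hdist : |hX.coeff x 1 - s| = 2 := by
      rw [h, ← neg_add', abs_neg, ← two_mul, abs_mul, hs, mul_one, abs_two]
    rw [hdist, max_eq_left (by linarith)]
  · have hdist : 2 ≤ |hX.coeff x 1 - s| := (le_max_iff.mp h.ge).resolve_right (by linarith)
    rcases (abs_eq zero_le_one).mp hs with rfl | rfl <;>
      rcases le_abs.mp hdist with h' | h' <;> linarith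

end Update

section Poles

variable {x y : X}

theorem sphere_subset_closedBall_basis_one (hX : IsTsirelsonSpace θ n X e) (hθ0 : 0 ≤ θ)
    (hθ1 : θ < 1) :
    Metric.sphere 0 1 ⊆ Metric.closedBall (e 1) 1 ∪ Metric.closedBall (-e 1) 1 := by
  intro v hv
  rw [mem_sphere_zero_iff_norm] at hv
  have herase := (hX.norm_erase_le hθ0 hθ1.le 1 v).trans hv.le
  obtain ⟨s, hs, hvs⟩ := exists_abs_eq_one_abs_sub_le_one
    ((hX.abs_coeff_le_norm hθ1.le v 1).trans hv.le)
  have hdist : ‖v - s • e 1‖ ≤ 1 :=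
    (hX.norm_sub_smul_basis_one hθ0 hθ1 v s).trans_le (max_le hvs herase)
  rcases (abs_eq zero_le_one).mp hs with rfl | rfl
  · exact Or.inl (by simpa [dist_eq_norm] using hdist)
  · exact Or.inr (by simpa [dist_eq_norm] using hdist)

theorem coeff_eq_zero_or_of_ne (hθ0 : 0 ≤ θ) (hθ : θ ≤ 1 / 2)
    (hxy : Metric.sphere 0 1 ⊆ Metric.closedBall x 1 ∪ Metric.closedBall y 1) {i j : ℕ+}
    (hij : i ≠ j) : hX.coeff x i = 0 ∨ hX.coeff y j = 0 := by
  obtain ⟨s, hs, hxs⟩ := exists_abs_eq_one_abs_sub_eq (hX.coeff x i)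
  obtain ⟨t, ht, hyt⟩ := exists_abs_eq_one_abs_sub_eq (hX.coeff y j)
  have hv : s • e i + t • e j ∈ Metric.sphere (0 : X) 1 := by
    rw [mem_sphere_zero_iff_norm, hX.norm_smul_basis_add_smul_basis hθ0 hθ hij, hs, ht, max_self]
  refine (hxy hv).imp (fun h => ?_) fun h => ?_ <;> rw [mem_closedBall_iff_norm'] at h
  · have := (hX.abs_coeff_le_norm (by linarith) _ i).trans h
    simp only [map_sub, map_add, map_smul, hX.coeff_basis, Pi.sub_apply, Pi.add_apply,
      Pi.smul_apply, Pi.single_eq_same, Pi.single_eq_of_ne hij, smul_eq_mul, mul_one, mul_zero,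
      add_zero, hxs] at this
    exact abs_eq_zero.mp (by linarith [abs_nonneg (hX.coeff x i)])
  · have := (hX.abs_coeff_le_norm (by linarith) _ j).trans h
    simp only [map_sub, map_add, map_smul, hX.coeff_basis, Pi.sub_apply, Pi.add_apply,
      Pi.smul_apply, Pi.single_eq_same, Pi.single_eq_of_ne hij.symm, smul_eq_mul, mul_one,
      mul_zero, zero_add, hyt] at this
    exact abs_eq_zero.mp (by linarith [abs_nonneg (hX.coeff y j)])

theorem coeff_sum_smul_const (A : Finset ℕ+) (c : ℝ) (i : ℕ+) :
    hX.coeff (∑ a ∈ A, c • e a) i = if i ∈ A then c else 0 :=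
  hX.coeff_sum_smul A (fun _ => c) i

theorem norm_sum_smul_basis (hX : IsTsirelsonSpace θ n X e) (hθ0 : 0 ≤ θ) (hθ1 : θ ≤ 1)
    {A : Finset ℕ+} (hA : A ∈ Schreier n) (hA1 : 1 ≤ θ * #A) :
    ‖∑ a ∈ A, (θ * #A : ℝ)⁻¹ • e a‖ = 1 := by
  set c : ℝ := (θ * #A)⁻¹
  have hc : |c| = c := abs_of_nonneg (by positivity)
  have hsum : θ * ∑ i ∈ A, |hX.coeff (∑ a ∈ A, c • e a) i| = 1 := by
    rw [Finset.sum_congr rfl fun i hi => by rw [coeff_sum_smul_const, if_pos hi, hc],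
      Finset.sum_const, nsmul_eq_mul, ← mul_assoc, mul_inv_cancel₀ (by positivity)]
  refine le_antisymm ?_ (hsum.symm.trans_le (hX.mul_sum_abs_coeff_le hθ1 _ hA))
  refine hX.norm_le_of_proj_eq_self hθ0 hθ1 (A := A)
    (hX.proj_eq_self_iff.mpr fun i hi => by rw [coeff_sum_smul_const, if_neg hi]) (fun i => ?_)
    hsum.le
  rw [coeff_sum_smul_const]
  split_ifs
  · exact hc.trans_le (inv_le_one_of_one_le₀ hA1)
  · simp

-- Adding `j` to the support of an average over a far set of `S_{n-1}` keeps the support in `S_n`.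
theorem exists_one_lt_norm_sub (hθ0 : 0 < θ) (hθ1 : θ ≤ 1) (hn : 2 ≤ n) {j : ℕ+} (hj : j ≠ 1) :
    ∃ (A : Finset ℕ+) (v : X), j ∉ A ∧ ‖v‖ = 1 ∧
      ∀ x, (∀ a ∈ A, hX.coeff x a = 0) → hX.coeff x j ≠ 0 → 1 < ‖x - v‖ := by
  obtain ⟨n, rfl⟩ := Nat.exists_eq_add_of_le' (one_le_two.trans hn)
  obtain ⟨m, hm⟩ : ∃ m : ℕ+, 1 ≤ θ * m :=
    ⟨Nat.succPNat ⌈θ⁻¹⌉₊, by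
      rw [← inv_le_iff_one_le_mul₀' hθ0]
      exact (Nat.le_ceil _).trans (by exact_mod_cast Nat.le_succ _)⟩
  set A := Finset.Ioc (j + m) (j + m + m)
  have hjA : ∀ a ∈ A, j < a := fun a ha =>
    (PNat.lt_add_right j m).trans (Finset.mem_Ioc.mp ha).1
  have hcard : #A = m := by simp [A, PNat.card_Ioc]
  have hA : A ∈ Schreier n := Schreier.mem_of_card_le (by lia) fun a ha => by
    have := PNat.coe_lt_coe _ _ |>.mpr (Finset.mem_Ioc.mp ha).1
    rw [hcard]
    push_cast at this
    lia
  have hjA' : j ∉ A := fun h => (hjA j h).false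
  have hA1 : 1 ≤ θ * #A := by rwa [hcard]
  refine ⟨A, ∑ a ∈ A, (θ * #A : ℝ)⁻¹ • e a, hjA',
    hX.norm_sum_smul_basis hθ0.le hθ1 (Schreier.subset_succ n hA) hA1, fun x hxA hxj => ?_⟩
  have hsum : θ * ∑ i ∈ A, |(hX.coeff x - hX.coeff (∑ a ∈ A, (θ * #A : ℝ)⁻¹ • e a)) i| = 1 := by
    rw [Finset.sum_congr rfl fun i hi => by
        rw [Pi.sub_apply, coeff_sum_smul_const, if_pos hi, hxA i hi, zero_sub, abs_neg,
          abs_of_nonneg (by positivity)],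
      Finset.sum_const, nsmul_eq_mul, ← mul_assoc, mul_inv_cancel₀ (by positivity)]
  have hbound := hX.mul_sum_abs_coeff_le hθ1 (x - ∑ a ∈ A, (θ * #A : ℝ)⁻¹ • e a)
    (Schreier.insert_mem_succ hA (Order.add_one_le_of_lt (one_le.lt_of_ne' hj)) hjA)
  rw [map_sub, Finset.sum_insert hjA', mul_add, hsum, Pi.sub_apply, coeff_sum_smul_const,
    if_neg hjA', sub_zero] at hbound
  have := mul_pos hθ0 (abs_pos.mpr hxj)
  linarith

theorem coeff_eq_zero_or (hθ0 : 0 < θ) (hθ : θ ≤ 1 / 2) (hn : 2 ≤ n)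
    (hxy : Metric.sphere 0 1 ⊆ Metric.closedBall x 1 ∪ Metric.closedBall y 1) {i j : ℕ+}
    (hi : i ≠ 1) : hX.coeff x i = 0 ∨ hX.coeff y j = 0 := by
  rcases ne_or_eq i j with hij | rfl
  · exact hX.coeff_eq_zero_or_of_ne hθ0.le hθ hxy hij
  by_contra! h
  obtain ⟨A, v, hiA, hv, hfar⟩ := hX.exists_one_lt_norm_sub hθ0 (by linarith) hn hi
  have hne : ∀ a ∈ A, a ≠ i := fun a ha hai => hiA (hai ▸ ha)
  rcases hxy (mem_sphere_zero_iff_norm.mpr hv) with hxv | hyv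
  · refine (hfar x (fun a ha => ?_) h.1).not_ge (mem_closedBall_iff_norm'.mp hxv)
    exact (hX.coeff_eq_zero_or_of_ne hθ0.le hθ hxy (hne a ha)).resolve_right h.2
  · refine (hfar y (fun a ha => ?_) h.2).not_ge (mem_closedBall_iff_norm'.mp hyv)
    exact (hX.coeff_eq_zero_or_of_ne hθ0.le hθ hxy (hne a ha).symm).resolve_left h.1

theorem eq_smul_basis_one (h : ∀ i ≠ 1, hX.coeff x i = 0) : x = hX.coeff x 1 • e 1 :=
  hX.coeff_injective <| by
    ext i
    rcases eq_or_ne i 1 with rfl | hi <;> simp [hX.coeff_basis, *]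

theorem coeff_eq_zero_of_sphere_subset (hθ0 : 0 < θ) (hθ : θ ≤ 1 / 2) (hn : 2 ≤ n) (hx : x ≠ 0)
    (hy : y ≠ 0) (hxy : Metric.sphere 0 1 ⊆ Metric.closedBall x 1 ∪ Metric.closedBall y 1) {i : ℕ+}
    (hi : i ≠ 1) : hX.coeff x i = 0 ∧ hX.coeff y i = 0 := by
  have exists_ne : ∀ z : X, z ≠ 0 → ∃ j, hX.coeff z j ≠ 0 := fun z hz =>
    Function.ne_iff.mp ((map_ne_zero_iff _ hX.coeff_injective).mpr hz)
  obtain ⟨j, hj⟩ := exists_ne x hx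
  obtain ⟨l, hl⟩ := exists_ne y hy
  exact ⟨(hX.coeff_eq_zero_or hθ0 hθ hn hxy hi).resolve_right hl,
    (hX.coeff_eq_zero_or hθ0 hθ hn (Set.union_comm _ _ ▸ hxy) hi).resolve_right hj⟩

theorem exists_isPolarIsometryPair (hX : IsTsirelsonSpace θ n X e) (hθ0 : 0 < θ)
    (hθ : θ ≤ 1 / 2) (hn : 2 ≤ n) {U V : X → X}
    (h : IsometryPairOn U V (Metric.sphere 0 1) (Metric.sphere 0 1)) :
    ∃ δ, IsPolarIsometryPair e U V δ := by
  have hnorm : ‖e 1‖ = 1 := hX.norm_basis (by linarith) 1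
  have hpole : e 1 ∈ Metric.sphere (0 : X) 1 := mem_sphere_zero_iff_norm.mpr hnorm
  have hneg : -e 1 ∈ Metric.sphere (0 : X) 1 := by
    rw [mem_sphere_zero_iff_norm, norm_neg, hnorm]
  have hcover := h.subset_closedBall_union hpole hneg
    (hX.sphere_subset_closedBall_basis_one hθ0.le (by linarith))
  have hne : ∀ x ∈ Metric.sphere (0 : X) 1, U x ≠ 0 := fun x hx =>
    Metric.ne_of_mem_sphere (h.mapsTo hx) one_ne_zero
  have hzero := fun i hi => hX.coeff_eq_zero_of_sphere_subset hθ0 hθ hn (hne _ hpole) (hne _ hneg)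
    hcover (i := i) hi
  have hU := hX.eq_smul_basis_one fun i hi => (hzero i hi).1
  have hU' := hX.eq_smul_basis_one fun i hi => (hzero i hi).2
  set a := hX.coeff (U (e 1)) 1
  set b := hX.coeff (U (-e 1)) 1
  have ha : |a| = 1 := by
    simpa [hU, norm_smul, hnorm] using h.mapsTo hpole
  have hb : |b| = 1 := by
    simpa [hU', norm_smul, hnorm] using h.mapsTo hneg
  have hab : |a - b| = 2 := by
    have := h.dist_eq _ hpole _ hneg
    rw [hU, hU', dist_eq_norm, dist_eq_norm, ← sub_smul, norm_smul, sub_neg_eq_add, ← two_smul ℝ,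
      norm_smul, hnorm] at this
    simpa using this
  have hba : b = -a := by grind
  refine ⟨a, h, ha, fun s hs => ?_⟩
  rcases (abs_eq zero_le_one).mp hs with rfl | rfl
  · simpa using hU
  · simpa [hba] using hU'

end Poles

section Faces

variable {U V : X → X} {δ s : ℝ} {x y : X}

theorem smul_basis_mem_sphere (hX : IsTsirelsonSpace θ n X e) (hθ1 : θ ≤ 1) (hs : |s| = 1)
    (i : ℕ+) : s • e i ∈ Metric.sphere 0 1 := by
  rw [mem_sphere_zero_iff_norm, norm_smul, hX.norm_basis hθ1, mul_one, Real.norm_eq_abs, hs]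

theorem isPolarIsometryPair_symm (hX : IsTsirelsonSpace θ n X e) (hθ1 : θ ≤ 1)
    (h : IsPolarIsometryPair e U V δ) : IsPolarIsometryPair e V U δ where
  toIsometryPairOn := h.symm
  abs_eq_one := h.abs_eq_one
  map_pole s hs := by
    have hδs := h.abs_mul_eq_one hs
    rw [← h.invOn.1 (hX.smul_basis_mem_sphere hθ1 hδs 1), h.map_pole _ hδs, h.mul_mul_cancel]

theorem coeff_one_map (hθ0 : 0 ≤ θ) (hθ1 : θ < 1)
    (h : IsPolarIsometryPair e U V δ) (hs : |s| = 1)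
    (hx : x ∈ Metric.sphere 0 1) (hxs : hX.coeff x 1 = s) : hX.coeff (U x) 1 = δ * s := by
  have hs' : |(-s)| = 1 := by rwa [abs_neg]
  rw [← neg_neg (δ * s), ← mul_neg, hX.coeff_one_eq_neg_iff hθ0 hθ1
    (mem_sphere_zero_iff_norm.mp (h.mapsTo hx)).le (h.abs_mul_eq_one hs'), ← h.map_pole _ hs',
    ← dist_eq_norm, h.dist_eq _ hx _ (hX.smul_basis_mem_sphere hθ1.le hs' 1), dist_eq_norm,
    ← hX.coeff_one_eq_neg_iff hθ0 hθ1 (mem_sphere_zero_iff_norm.mp hx).le hs', hxs, neg_neg]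

theorem update_one_mem_sphere (hθ0 : 0 ≤ θ) (hθ1 : θ < 1) (hs : |s| = 1)
    (hx : x ∈ Metric.closedBall 0 1) : hX.update 1 s x ∈ Metric.sphere 0 1 := by
  rw [mem_sphere_zero_iff_norm, hX.norm_update_one hθ0 hθ1, hs, max_eq_left]
  exact (hX.norm_erase_le hθ0 hθ1.le 1 x).trans (mem_closedBall_zero_iff.mp hx)

/-- The self-map of the unit ball induced by the action of `U` on the face of the unit sphere
where the first coordinate is `s`; it leaves the first coordinate unchanged. -/
def faceLift (U : X → X) (s : ℝ) (x : X) : X :=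
  hX.update 1 (hX.coeff x 1) (U (hX.update 1 s x))

theorem faceLift_mem_closedBall (hθ0 : 0 ≤ θ) (hθ1 : θ < 1)
    (hU : Set.MapsTo U (Metric.sphere 0 1) (Metric.sphere 0 1)) (hs : |s| = 1)
    (hx : x ∈ Metric.closedBall 0 1) : hX.faceLift U s x ∈ Metric.closedBall 0 1 := by
  have hUx := hU (hX.update_one_mem_sphere hθ0 hθ1 hs hx)
  rw [mem_sphere_zero_iff_norm] at hUx
  rw [mem_closedBall_zero_iff] at hx ⊢
  rw [faceLift, hX.norm_update_one hθ0 hθ1]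
  exact max_le ((hX.abs_coeff_le_norm hθ1.le x 1).trans hx)
    ((hX.norm_erase_le hθ0 hθ1.le 1 _).trans hUx.le)

theorem coeff_faceLift_of_ne {i : ℕ+} (hi : i ≠ 1) (hxs : hX.coeff x 1 = s) :
    hX.coeff (hX.faceLift U s x) i = hX.coeff (U x) i := by
  rw [faceLift, coeff_update, Function.update_of_ne hi, update_eq_self hX hxs]

theorem faceLift_zero (hU : U (s • e 1) = (δ * s) • e 1) : hX.faceLift U s 0 = 0 := by
  simp [faceLift, update, hU, erase_apply, hX.coeff_basis]

theorem faceLift_faceLift (hθ0 : 0 ≤ θ) (hθ1 : θ < 1)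
    (h : IsPolarIsometryPair e U V δ) (hs : |s| = 1)
    (hx : x ∈ Metric.closedBall 0 1) : hX.faceLift V (δ * s) (hX.faceLift U s x) = x := by
  have hmem := hX.update_one_mem_sphere hθ0 hθ1 hs hx
  have hcoeff := hX.coeff_one_map hθ0 hθ1 h hs hmem (by simp [coeff_update])
  rw [faceLift, faceLift, update_update, hX.update_eq_self hcoeff, h.invOn.1 hmem, update_update,
    coeff_update, Function.update_self, hX.update_eq_self rfl]

theorem dist_faceLift (hθ0 : 0 ≤ θ) (hθ1 : θ < 1)
    (h : IsPolarIsometryPair e U V δ) (hs : |s| = 1)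
    (hx : x ∈ Metric.closedBall 0 1) (hy : y ∈ Metric.closedBall 0 1) :
    dist (hX.faceLift U s x) (hX.faceLift U s y) = dist x y := by
  have hcoeff : ∀ z ∈ Metric.closedBall (0 : X) 1, hX.coeff (U (hX.update 1 s z)) 1 = δ * s :=
    fun z hz => hX.coeff_one_map hθ0 hθ1 h hs (hX.update_one_mem_sphere hθ0 hθ1 hs hz)
      (by simp [coeff_update])
  have herase : ‖hX.erase 1 (U (hX.update 1 s x) - U (hX.update 1 s y))‖ =
      ‖hX.erase 1 (x - y)‖ := by
    rw [hX.erase_eq_self (by simp [hcoeff x hx, hcoeff y hy]), ← dist_eq_norm,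
      h.dist_eq _ (hX.update_one_mem_sphere hθ0 hθ1 hs hx) _
        (hX.update_one_mem_sphere hθ0 hθ1 hs hy),
      dist_eq_norm, update_sub_update, sub_self, zero_smul, zero_add]
  rw [dist_eq_norm, faceLift, faceLift, update_sub_update,
    hX.norm_smul_basis_one_add hθ0 hθ1 (by simp [coeff_erase]), herase, dist_eq_norm,
    hX.norm_eq_max hθ0 hθ1 (x - y), map_sub hX.coeff, Pi.sub_apply]

theorem isometryPairOn_faceLift (hθ0 : 0 ≤ θ) (hθ1 : θ < 1)
    (h : IsPolarIsometryPair e U V δ) (hs : |s| = 1) :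
    IsometryPairOn (hX.faceLift U s) (hX.faceLift V (δ * s)) (Metric.closedBall 0 1)
      (Metric.closedBall 0 1) where
  mapsTo _ := hX.faceLift_mem_closedBall hθ0 hθ1 h.mapsTo hs
  mapsTo_symm _ := hX.faceLift_mem_closedBall hθ0 hθ1 h.mapsTo_symm (h.abs_mul_eq_one hs)
  invOn := by
    refine ⟨fun x hx => hX.faceLift_faceLift hθ0 hθ1 h hs hx, fun x hx => ?_⟩
    have := hX.faceLift_faceLift hθ0 hθ1 (hX.isPolarIsometryPair_symm hθ1.le h)
      (h.abs_mul_eq_one hs) hx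
    rwa [h.mul_mul_cancel] at this
  dist_eq _ hx _ hy := hX.dist_faceLift hθ0 hθ1 h hs hx hy

theorem exists_coeff_map_face (hθ0 : 0 < θ) (hθ : θ ≤ 1 / 2) (hn : 2 ≤ n)
    (h : IsPolarIsometryPair e U V δ) (hs : |s| = 1) :
    ∃ η : ℕ+ → ℝ, (∀ i, |η i| = 1) ∧ ∀ x ∈ Metric.sphere 0 1, hX.coeff x 1 = s →
      ∀ i ≠ 1, hX.coeff (U x) i = η i * hX.coeff x i := by
  obtain ⟨T, hT⟩ := (hX.isometryPairOn_faceLift hθ0.le (by linarith) h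
    hs).exists_linearIsometryEquiv (hX.faceLift_zero (h.map_pole s hs))
  obtain ⟨η, hη, hηT⟩ := hX.coeff_linearIsometryEquiv hθ0 hθ hn T
  refine ⟨η, hη, fun x hx hxs i hi => ?_⟩
  rw [← hηT, hT x (Metric.sphere_subset_closedBall hx), hX.coeff_faceLift_of_ne hi hxs]

end Faces

section Rigidity

variable {U V : X → X} {δ s σ ε : ℝ} {x y : X} {i : ℕ+}

theorem exists_mem_sphere_norm_sub_le (hθ0 : 0 ≤ θ) (hθ : θ ≤ 1 / 2)
    (hx : x ∈ Metric.sphere 0 1) (hs : |s| = 1) (hxs : |hX.coeff x 1 - s| ≤ 1) (hi : i ≠ 1)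
    (hσ : |σ| = 1) :
    ∃ y ∈ Metric.sphere 0 1, hX.coeff y 1 = s ∧ hX.coeff y i = σ ∧
      ‖x - y‖ ≤ max 1 |hX.coeff x i - σ| := by
  have hθ1 : θ < 1 := by linarith
  set w := hX.erase i (hX.erase 1 x)
  have hw : ‖w‖ ≤ 1 := (hX.norm_erase_le hθ0 hθ1.le _ _).trans <|
    (hX.norm_erase_le hθ0 hθ1.le _ _).trans (mem_sphere_zero_iff_norm.mp hx).le
  have hw1 : hX.coeff w 1 = 0 := by simp [w, coeff_erase]
  have hwi : hX.coeff w i = 0 := by simp [w, coeff_erase]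
  have hx_eq : x = hX.coeff x 1 • e 1 + (hX.coeff x i • e i + w) := by
    nth_rw 1 [← hX.smul_basis_add_erase 1 x, ← hX.smul_basis_add_erase i (hX.erase 1 x),
      coeff_erase, if_neg hi]
  refine ⟨s • e 1 + (σ • e i + (1 - θ) • w), ?_, by simp [hX.coeff_basis, hw1, hi.symm],
    by simp [hX.coeff_basis, hwi, hi], ?_⟩
  · rw [mem_sphere_zero_iff_norm, hX.norm_smul_basis_one_add hθ0 hθ1
      (by simp [hX.coeff_basis, hw1, hi.symm]), hs, max_eq_left]
    refine (hX.norm_smul_basis_add_le hθ0 hθ1.le (by simp [hwi]) σ).trans (max_le hσ.le ?_)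
    rw [hσ, norm_smul, Real.norm_of_nonneg (by linarith)]
    nlinarith
  · have hsub : x - (s • e 1 + (σ • e i + (1 - θ) • w)) =
        (hX.coeff x 1 - s) • e 1 + ((hX.coeff x i - σ) • e i + θ • w) := by
      nth_rw 1 [hx_eq]
      module
    rw [hsub, hX.norm_smul_basis_one_add hθ0 hθ1 (by simp [hX.coeff_basis, hw1, hi.symm])]
    refine max_le (hxs.trans (le_max_left _ _)) <|
      (hX.norm_smul_basis_add_le hθ0 hθ1.le (by simp [hwi]) _).trans <|
        max_le (le_max_right _ _) ?_
    rw [norm_smul, Real.norm_of_nonneg hθ0]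
    have h1 := le_max_left 1 |hX.coeff x i - σ|
    have h2 := le_max_right 1 |hX.coeff x i - σ|
    nlinarith [norm_nonneg w]

theorem coeff_map_eq_of_abs_le (hθ1 : θ ≤ 1)
    (h : IsometryPairOn U V (Metric.sphere 0 1) (Metric.sphere 0 1)) (hε : |ε| = 1)
    (hx : x ∈ Metric.sphere 0 1)
    (hy : ∀ σ : ℝ, |σ| = 1 → ∃ y ∈ Metric.sphere 0 1, hX.coeff (U y) i = ε * σ ∧
      ‖x - y‖ ≤ max 1 |hX.coeff x i - σ|)
    (hle : |hX.coeff x i| ≤ |hX.coeff (U x) i|) :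
    hX.coeff (U x) i = ε * hX.coeff x i := by
  have hεε := mul_self_eq_one_of_abs_eq_one hε
  obtain ⟨t, ht, hut⟩ := exists_abs_eq_one_abs_sub_eq (hX.coeff (U x) i)
  obtain ⟨y, hmem, hUy, hxy⟩ := hy (ε * t) (by rw [abs_mul, hε, ht, one_mul])
  rw [← mul_assoc, hεε, one_mul] at hUy
  refine (eq_of_abs_sub_eq_of_le_max ht (by rwa [abs_mul, hε, one_mul]) hut ?_).symm
  calc |hX.coeff (U x) i - t| = |hX.coeff (U x - U y) i| := by rw [map_sub, Pi.sub_apply, hUy]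
    _ ≤ ‖U x - U y‖ := hX.abs_coeff_le_norm hθ1 _ i
    _ = ‖x - y‖ := by rw [← dist_eq_norm, h.dist_eq _ hx _ hmem, dist_eq_norm]
    _ ≤ max 1 |hX.coeff x i - ε * t| := hxy
    _ = max 1 |ε * hX.coeff x i - t| := by
      rw [← one_mul |hX.coeff x i - ε * t|, ← hε, ← abs_mul, mul_sub, ← mul_assoc, hεε, one_mul]

theorem coeff_map_eq_of_face (hθ0 : 0 ≤ θ) (hθ : θ ≤ 1 / 2)
    (h : IsometryPairOn U V (Metric.sphere 0 1) (Metric.sphere 0 1)) (hs : |s| = 1)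
    (hε : |ε| = 1) (hi : i ≠ 1)
    (hface : ∀ y ∈ Metric.sphere 0 1, hX.coeff y 1 = s → hX.coeff (U y) i = ε * hX.coeff y i)
    (hx : x ∈ Metric.sphere 0 1) (hxs : |hX.coeff x 1 - s| ≤ 1)
    (hle : |hX.coeff x i| ≤ |hX.coeff (U x) i|) :
    hX.coeff (U x) i = ε * hX.coeff x i := by
  refine hX.coeff_map_eq_of_abs_le (by linarith) h hε hx (fun σ hσ => ?_) hle
  obtain ⟨y, hy, hy1, hyi, hxy⟩ := hX.exists_mem_sphere_norm_sub_le hθ0 hθ hx hs hxs hi hσ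
  exact ⟨y, hy, by rw [hface y hy hy1, hyi], hxy⟩

theorem coeff_map_eq_of_faces (hθ0 : 0 ≤ θ) (hθ : θ ≤ 1 / 2)
    (h : IsometryPairOn U V (Metric.sphere 0 1) (Metric.sphere 0 1)) (hε : |ε| = 1)
    (hface : ∀ y ∈ Metric.sphere 0 1, |hX.coeff y 1| = 1 → hX.coeff (U y) i = ε * hX.coeff y i)
    (hx : x ∈ Metric.sphere 0 1) (hle : |hX.coeff x i| ≤ |hX.coeff (U x) i|) :
    hX.coeff (U x) i = ε * hX.coeff x i := by
  have hθ1 : θ < 1 := by linarith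
  have hx1 := mem_sphere_zero_iff_norm.mp hx
  rcases eq_or_ne i 1 with rfl | hi
  · refine hX.coeff_map_eq_of_abs_le hθ1.le h hε hx (fun σ hσ => ⟨σ • e 1, ?_⟩) hle
    have hmem := hX.smul_basis_mem_sphere hθ1.le hσ 1
    have hcoeff : hX.coeff (σ • e 1) 1 = σ := by simp [hX.coeff_basis]
    refine ⟨hmem, by rw [hface _ hmem (by rw [hcoeff, hσ]), hcoeff], ?_⟩
    rw [hX.norm_sub_smul_basis_one hθ0 hθ1, max_comm]
    exact max_le_max_right _ ((hX.norm_erase_le hθ0 hθ1.le 1 x).trans hx1.le)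
  · obtain ⟨s, hs, hxs⟩ := exists_abs_eq_one_abs_sub_le_one
      ((hX.abs_coeff_le_norm hθ1.le x 1).trans hx1.le)
    exact hX.coeff_map_eq_of_face hθ0 hθ h hs hε hi
      (fun y hy hys => hface y hy (by rw [hys, hs])) hx hxs hle

theorem abs_coeff_map_basis (hθ0 : 0 < θ) (hθ : θ ≤ 1 / 2) (hn : 2 ≤ n)
    (h : IsPolarIsometryPair e U V δ) (i : ℕ+) : |hX.coeff (U (e i)) i| = 1 := by
  have hθ1 : θ ≤ 1 := by linarith
  have hei : e i ∈ Metric.sphere (0 : X) 1 := mem_sphere_zero_iff_norm.mpr (hX.norm_basis hθ1 i)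
  rcases eq_or_ne i 1 with rfl | hi
  · rw [hX.coeff_one_map hθ0.le (by linarith) h abs_one hei (by simp [hX.coeff_basis])]
    exact h.abs_mul_eq_one abs_one
  have hUei := h.mapsTo hei
  have hle : ∀ j, |hX.coeff (U (e i)) j| ≤ 1 := fun j =>
    (hX.abs_coeff_le_norm hθ1 _ j).trans (mem_sphere_zero_iff_norm.mp hUei).le
  have h' := hX.isPolarIsometryPair_symm hθ1 h
  obtain ⟨s, hs, hUs⟩ := exists_abs_eq_one_abs_sub_le_one (hle 1)
  obtain ⟨η, hη, hface⟩ := hX.exists_coeff_map_face hθ0 hθ hn h' hs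
  have := hX.coeff_map_eq_of_face hθ0.le hθ h'.toIsometryPairOn hs (hη i) hi
    (fun y hy hys => hface y hy hys i hi) hUei hUs
    (by simpa [h.invOn.1 hei, hX.coeff_basis] using hle i)
  rw [h.invOn.1 hei, hX.coeff_basis, Pi.single_eq_same] at this
  rw [← one_mul |hX.coeff _ _|, ← hη i, ← abs_mul, ← this, abs_one, hη]

theorem coeff_map_face (hθ0 : 0 < θ) (hθ : θ ≤ 1 / 2) (hn : 2 ≤ n)
    (h : IsPolarIsometryPair e U V δ) (hx : x ∈ Metric.sphere 0 1) (hx1 : |hX.coeff x 1| = 1)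
    (i : ℕ+) : hX.coeff (U x) i = hX.coeff (U (e i)) i * hX.coeff x i := by
  have hθ1 : θ < 1 := by linarith
  have hei : e i ∈ Metric.sphere (0 : X) 1 :=
    mem_sphere_zero_iff_norm.mpr (hX.norm_basis hθ1.le i)
  rcases eq_or_ne i 1 with rfl | hi
  · rw [hX.coeff_one_map hθ0.le hθ1 h hx1 hx rfl,
      hX.coeff_one_map hθ0.le hθ1 h abs_one hei (by simp [hX.coeff_basis]), mul_one]
  obtain ⟨η, hη, hface⟩ := hX.exists_coeff_map_face hθ0 hθ hn h hx1
  have hUei := hX.coeff_map_eq_of_face hθ0.le hθ h.toIsometryPairOn hx1 (hη i) hi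
    (fun y hy hys => hface y hy hys i hi) hei (by simp [hX.coeff_basis, hi.symm, hx1])
    (by simp [hX.abs_coeff_map_basis hθ0 hθ hn h i, hX.coeff_basis])
  rw [hface x hx rfl i hi, hUei, hX.coeff_basis, Pi.single_eq_same, mul_one]

theorem coeff_map_sphere (hθ0 : 0 < θ) (hθ : θ ≤ 1 / 2) (hn : 2 ≤ n)
    (h : IsPolarIsometryPair e U V δ) (hx : x ∈ Metric.sphere 0 1) (i : ℕ+) :
    hX.coeff (U x) i = hX.coeff (U (e i)) i * hX.coeff x i := by
  have hε := hX.abs_coeff_map_basis hθ0 hθ hn h i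
  have hεε := mul_self_eq_one_of_abs_eq_one hε
  have hface := fun y hy hy1 => hX.coeff_map_face hθ0 hθ hn h (x := y) hy hy1 i
  rcases le_total |hX.coeff x i| |hX.coeff (U x) i| with hle | hle
  · exact hX.coeff_map_eq_of_faces hθ0.le hθ h.toIsometryPairOn hε hface hx hle
  have hface_symm : ∀ y ∈ Metric.sphere 0 1, |hX.coeff y 1| = 1 →
      hX.coeff (V y) i = hX.coeff (U (e i)) i * hX.coeff y i := fun y hy hy1 => by
    have hVy := hX.coeff_one_map hθ0.le (by linarith)
      (hX.isPolarIsometryPair_symm (by linarith) h) hy1 hy rfl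
    have hUVy := hface _ (h.mapsTo_symm hy) (by rw [hVy, h.abs_mul_eq_one hy1])
    rw [h.invOn.2 hy] at hUVy
    rw [hUVy, ← mul_assoc, hεε, one_mul]
  have hVUx := hX.coeff_map_eq_of_faces hθ0.le hθ h.symm hε hface_symm (h.mapsTo hx)
    (by rwa [h.invOn.1 hx])
  rw [h.invOn.1 hx] at hVUx
  rw [hVUx, ← mul_assoc, hεε, one_mul]

end Rigidity

end IsTsirelsonSpace

theorem tsirelson_sphere_isometry_form_Sn_general
    (θ : ℝ) (hθ0 : 0 < θ) (hθ : θ ≤ 1 / 2) (n : ℕ) (hn : 2 ≤ n)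
    (X : Type*) [NormedAddCommGroup X] [NormedSpace ℝ X] (e : ℕ+ → X)
    (hX : IsTsirelsonSpace θ n X e)
    (U : Metric.sphere (0 : X) 1 → Metric.sphere (0 : X) 1)
    (hU : Isometry U) (hUsurj : Function.Surjective U) :
    ∃ ε : ℕ+ → ℝ,
      (∀ i, ε i = 1 ∨ ε i = -1) ∧
      ∀ (x : Metric.sphere (0 : X) 1) (a : ℕ+ → ℝ),
        HasSum (fun i => a i • e i) (x : X) →
        HasSum (fun i => (ε i * a i) • e i) ((U x : X)) := by
  obtain ⟨f, g, hfg, hf⟩ := IsometryPairOn.exists_of_isometryEquiv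
    ⟨Equiv.ofBijective U ⟨hU.injective, hUsurj⟩, hU⟩
  obtain ⟨δ, h⟩ := hX.exists_isPolarIsometryPair hθ0 hθ hn hfg
  refine ⟨fun i => hX.coeff (f (e i)) i,
    fun i => (abs_eq zero_le_one).mp (hX.abs_coeff_map_basis hθ0 hθ hn h i), fun x a ha => ?_⟩
  obtain rfl := hX.coeff_eq_of_hasSum ha
  simp only [← hX.coeff_map_sphere hθ0 hθ hn h x.2]
  exact hf x ▸ hX.hasSum_coeff (f x)

/-- For integer `θ⁻¹ ≥ 2` and `n ≥ 2`, every surjective isometry of the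
unit sphere of `T[θ, S_n]` acts on basis expansions by `∑ aᵢ eᵢ ↦ ∑ εᵢ aᵢ eᵢ`. -/
theorem tsirelson_sphere_isometry_form_Sn
    (θ : ℝ) (hθ0 : 0 < θ) (k : ℕ) (hk : 2 ≤ k) (hθk : θ⁻¹ = (k : ℝ))
    (n : ℕ) (hn : 2 ≤ n)
    (X : Type*) [NormedAddCommGroup X] [NormedSpace ℝ X] (e : ℕ+ → X)
    (hX : IsTsirelsonSpace θ n X e)
    (U : Metric.sphere (0 : X) 1 → Metric.sphere (0 : X) 1)
    (hU : Isometry U) (hUsurj : Function.Surjective U) :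
    ∃ ε : ℕ+ → ℝ,
      (∀ i, ε i = 1 ∨ ε i = -1) ∧
      ∀ (x : Metric.sphere (0 : X) 1) (a : ℕ+ → ℝ),
        HasSum (fun i => a i • e i) (x : X) →
        HasSum (fun i => (ε i * a i) • e i) ((U x : X)) := by
  refine tsirelson_sphere_isometry_form_Sn_general θ hθ0 ?_ n hn X e hX U hU hUsurj
  exact (le_one_div hθ0 two_pos).mpr (by rw [one_div, hθk]; exact_mod_cast hk)
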